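/- Fix integers m ≥ 2, w ≥ 3, s ≥ 2w, and assume d ≥ 2s−1. Fix distinct lines D, R ⊂ ℙ^m with D ∩ R ≠ ∅; set {O} := D ∩ R and let U be the plane spanned by D ∪ R. Let E ⊂ U be a general subset with #E = s−2w. Let A_1 ⊂ D be the zero-dimensional degree-w subscheme of D supported at O; fix O' ∈ R ∖ {O} and let A_2 ⊂ R be the zero-dimensional degree-w subscheme of R supported at O'. Then there is a point P ∈ ⟨ν_d(A_1 ∪ A_2 ∪ E)⟩ such that br(P) = s and sr(P) = 2d+3+s−4w. -/

import Mathlib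

open scoped LinearAlgebra.Projectivization

noncomputable section

/-- The polynomial ring in `m+1` variables over `K`: homogeneous coordinate ring of `ℙ^m`. -/
abbrev PR (K : Type) [Field K] (m : ℕ) : Type := MvPolynomial (Fin (m+1)) K

/-- The space of degree-`d` forms in `m+1` variables. -/
abbrev Hd (K : Type) [Field K] (m d : ℕ) : Submodule K (PR K m) :=
  MvPolynomial.homogeneousSubmodule (Fin (m+1)) K d

/-- Projective `m`-space over `K`. -/
abbrev Pm (K : Type) [Field K] (m : ℕ) := ℙ K (Fin (m+1) → K)

/-- The target projective space `ℙ^n`, `n = C(m+d,m) - 1`, of the degree-`d` Veronese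
embedding, realized as the projectivization of the dual of the space of degree-`d` forms
(the space of degree-`d` symmetric tensors). -/
abbrev PN (K : Type) [Field K] (m d : ℕ) := ℙ K (Module.Dual K (Hd K m d))

variable {K : Type} [Field K] {m : ℕ}

/-- Hilbert function of `R/I` in degree `t`. -/
def hilbQ (I : Ideal (PR K m)) (t : ℕ) : ℕ :=
  Module.finrank K ((Hd K m t).map (Ideal.Quotient.mkₐ K I).toLinearMap)

/-- The degree (length) of the projective scheme defined by `I`: the eventual value of the
Hilbert function of `R/I`. -/
def idealDeg (I : Ideal (PR K m)) : ℕ := Filter.limsup (fun t => hilbQ I t) Filter.atTop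

/-- `h^1(𝓘_Z(d))` for the zero-dimensional scheme `Z` with (saturated) ideal `I`:
it equals `deg Z - dim (R/I)_d`. -/
def h1I (I : Ideal (PR K m)) (d : ℕ) : ℕ := idealDeg I - hilbQ I d

/-- An ideal is homogeneous. -/
def IsHomogI (I : Ideal (PR K m)) : Prop :=
  ∀ f ∈ I, ∀ n : ℕ, MvPolynomial.homogeneousComponent n f ∈ I

/-- An ideal is saturated with respect to the irrelevant maximal ideal. -/
def IsSatI (I : Ideal (PR K m)) : Prop :=
  ∀ f : PR K m, (∀ i, MvPolynomial.X i * f ∈ I) → f ∈ I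

/-- A closed subscheme of `ℙ^m`, given by its saturated homogeneous ideal. -/
structure PSub (K : Type) [Field K] (m : ℕ) where
  I : Ideal (PR K m)
  homog : IsHomogI I
  sat : IsSatI I

/-- A (closed sub)scheme is zero-dimensional iff the Hilbert function of `R/I` is bounded. -/
def IsZeroDimI (I : Ideal (PR K m)) : Prop := ∃ C, ∀ t, hilbQ I t ≤ C

/-- A polynomial vanishes at a projective point (every homogeneous component vanishes
at a representative). -/
def vanishesAt (f : PR K m) (a : Pm K m) : Prop :=
  ∀ n : ℕ, MvPolynomial.eval a.rep (MvPolynomial.homogeneousComponent n f) = 0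

/-- Zero locus of an ideal in `ℙ^m`. -/
def pzeroLocus (I : Ideal (PR K m)) : Set (Pm K m) := {a | ∀ f ∈ I, vanishesAt f a}

/-- The (saturated) homogeneous ideal of a set of points of `ℙ^m`. -/
def idealOfSet (S : Set (Pm K m)) : Ideal (PR K m) :=
  Ideal.span {f : PR K m | (∃ n, f.IsHomogeneous n) ∧ ∀ a ∈ S, MvPolynomial.eval a.rep f = 0}

/-- Saturation of a homogeneous ideal: the smallest saturated homogeneous ideal containing it. -/
def satIdeal (J : Ideal (PR K m)) : Ideal (PR K m) := sInf {J' | J ≤ J' ∧ IsHomogI J' ∧ IsSatI J'}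

/-- The scheme defined by the (saturated) ideal `I` is reduced. -/
def IsReducedI (I : Ideal (PR K m)) : Prop := I = idealOfSet (pzeroLocus I)

/-- Connected component of a zero-dimensional scheme at a point `a`: the largest subscheme
supported at `a`, i.e. the `a`-primary component. -/
def componentAt (I : Ideal (PR K m)) (a : Pm K m) : Ideal (PR K m) :=
  sInf {J | I ≤ J ∧ IsHomogI J ∧ IsSatI J ∧ pzeroLocus J ⊆ {a}}

/-- Residual scheme of `Z` with respect to the hypersurface `f = 0`: the colon ideal `(I_Z : f)`. -/
def resIdeal (I : Ideal (PR K m)) (f : PR K m) : Ideal (PR K m) :=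
  Submodule.colon I (Ideal.span {f})

/-- Degree of the scheme-theoretic intersection of the subschemes defined by `I` and `J`. -/
def interDeg (I J : Ideal (PR K m)) : ℕ := idealDeg (I ⊔ J)

/-- The degree-`d` Veronese image of a vector `v`: the evaluation-at-`v` functional on
degree-`d` forms. -/
def nu (d : ℕ) (v : Fin (m+1) → K) : Module.Dual K (Hd K m d) :=
  (MvPolynomial.aeval v).toLinearMap ∘ₗ (Hd K m d).subtype

/-- The linear span of the Veronese image `ν_d(S)` of a set `S` of points of `ℙ^m`. -/
def dualSpan (d : ℕ) (S : Set (Pm K m)) : Submodule K (Module.Dual K (Hd K m d)) :=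
  Submodule.span K ((fun a => nu d a.rep) '' S)

/-- The linear span `⟨ν_d(Z)⟩` of the Veronese image of the subscheme with ideal `I`:
the annihilator of the degree-`d` part of `I`. -/
def schemeSpanSub (I : Ideal (PR K m)) (d : ℕ) : Submodule K (Module.Dual K (Hd K m d)) where
  carrier := {φ | ∀ f : Hd K m d, (f : PR K m) ∈ I → φ f = 0}
  add_mem' := by
    intro a b ha hb f hf
    simp [LinearMap.add_apply, ha f hf, hb f hf]
  zero_mem' := by intro f hf; simp
  smul_mem' := by
    intro c a ha f hf
    simp [LinearMap.smul_apply, ha f hf]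

/-- `P ∈ ⟨ν_d(Z)⟩`, for `Z` the subscheme with ideal `I`. -/
def inSpanI (I : Ideal (PR K m)) (d : ℕ) (P : PN K m d) : Prop := P.rep ∈ schemeSpanSub I d

/-- `P ∈ ⟨ν_d(S)⟩` for a set `S` of points of `ℙ^m`. -/
def inSpanSet (d : ℕ) (S : Set (Pm K m)) (P : PN K m d) : Prop := P.rep ∈ dualSpan d S

/-- `L` is a linear subspace of `ℙ^m`. -/
def IsLinearSub (L : Set (Pm K m)) : Prop :=
  ∃ W : Submodule K (Fin (m+1) → K), L = {a | a.submodule ≤ W}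

/-- `L` is a line of `ℙ^m`. -/
def IsLine (L : Set (Pm K m)) : Prop :=
  ∃ W : Submodule K (Fin (m+1) → K), Module.finrank K W = 2 ∧ L = {a | a.submodule ≤ W}

/-- `L` is a plane of `ℙ^m`. -/
def IsPlane (L : Set (Pm K m)) : Prop :=
  ∃ W : Submodule K (Fin (m+1) → K), Module.finrank K W = 3 ∧ L = {a | a.submodule ≤ W}

/-- `J` is the (saturated homogeneous) ideal of a conic of `ℙ^m`: a degree-2 curve contained
in a plane (possibly reducible). -/
def IsConic (J : Ideal (PR K m)) : Prop :=
  ∃ (W : Submodule K (Fin (m+1) → K)) (q : PR K m),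
    Module.finrank K W = 3 ∧ q.IsHomogeneous 2 ∧
    q ∉ idealOfSet {a : Pm K m | a.submodule ≤ W} ∧
    J = satIdeal (idealOfSet {a : Pm K m | a.submodule ≤ W} ⊔ Ideal.span {q})

/-- The algebra of polynomial functions on a `K`-vector space. -/
def polyFunctions (K V : Type) [Field K] [AddCommGroup V] [Module K V] : Subalgebra K (V → K) :=
  Algebra.adjoin K {g : V → K | ∃ φ : V →ₗ[K] K, g = ⇑φ}

/-- Zariski closure of a subset of a projective space. -/
def zClosure {V : Type} [AddCommGroup V] [Module K V] (T : Set (ℙ K V)) : Set (ℙ K V) :=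
  {P | ∀ F ∈ polyFunctions K V, (∀ Q ∈ T, ∀ c : K, F (c • Q.rep) = 0) →
    ∀ c : K, F (c • P.rep) = 0}

/-- The Veronese variety `X_{m,d} = ν_d(ℙ^m)` as a subset of `PN K m d`. -/
def XSet (K : Type) [Field K] (m d : ℕ) : Set (PN K m d) :=
  {Q | ∃ a : Pm K m, Q.submodule = Submodule.span K {nu d a.rep}}

/-- The image `ν_d(S)` of a set of points of `ℙ^m`, as a subset of `PN K m d`. -/
def nuSet (d : ℕ) (S : Set (Pm K m)) : Set (PN K m d) :=
  {Q | ∃ a ∈ S, Q.submodule = Submodule.span K {nu d a.rep}}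

/-- The rank of a point `P` of `PN` with respect to a subset `Y ⊆ PN`. -/
def rankWrt {m d : ℕ} (Y : Set (PN K m d)) (P : PN K m d) : ℕ :=
  sInf {r | ∃ S : Finset (PN K m d), ↑S ⊆ Y ∧ S.card = r ∧
    P.rep ∈ Submodule.span K (Projectivization.rep '' (S : Set (PN K m d)))}

/-- The `s`-th secant variety of `Y ⊆ PN`: the Zariski closure of the union of the spans
of `s` points of `Y`. -/
def secantWrt {m d : ℕ} (Y : Set (PN K m d)) (s : ℕ) : Set (PN K m d) :=
  zClosure {Q | ∃ S : Finset (PN K m d), ↑S ⊆ Y ∧ S.card ≤ s ∧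
    Q.rep ∈ Submodule.span K (Projectivization.rep '' (S : Set (PN K m d)))}

/-- The border rank of `P` with respect to `Y ⊆ PN`. -/
def brankWrt {m d : ℕ} (Y : Set (PN K m d)) (P : PN K m d) : ℕ :=
  sInf {s | 0 < s ∧ P ∈ secantWrt Y s}

/-- Symmetric rank. -/
def srank {m : ℕ} (d : ℕ) (P : PN K m d) : ℕ := rankWrt (XSet K m d) P

/-- Border rank. -/
def brank {m : ℕ} (d : ℕ) (P : PN K m d) : ℕ := brankWrt (XSet K m d) P

/-- Cactus rank: minimal degree of a zero-dimensional closed subscheme `E ⊂ ℙ^m` with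
`P ∈ ⟨ν_d(E)⟩`. -/
def crank {m : ℕ} (d : ℕ) (P : PN K m d) : ℕ :=
  sInf {c | ∃ Z : PSub K m, IsZeroDimI Z.I ∧ idealDeg Z.I = c ∧ inSpanI Z.I d P}

/-- `σ_{s,r}(X_{m,d})`. -/
def sigmaSet (K : Type) [Field K] (m d s r : ℕ) : Set (PN K m d) :=
  {P | brank d P = s ∧ srank d P = r}

/-- A property `Φ` holds for a general `k`-tuple of points of the linear subspace of `ℙ^m`
determined by `W`. -/
def GenerallyOn (W : Submodule K (Fin (m+1) → K)) (k : ℕ)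
    (Φ : (Fin k → Pm K m) → Prop) : Prop :=
  ∃ w : Fin 3 → W, Submodule.span K (Set.range fun j => (w j : Fin (m+1) → K)) = W ∧
    ∃ F : MvPolynomial (Fin k × Fin 3) K, F ≠ 0 ∧
      ∀ c : Fin k → Fin 3 → K,
        MvPolynomial.eval (fun p => c p.1 p.2) F ≠ 0 →
        ∀ e : Fin k → Pm K m,
          (∀ i, (e i).submodule = Submodule.span K {∑ j, c i j • (w j : Fin (m+1) → K)}) → Φ e

end

namespace S10
open MvPolynomial

lemma finrank_H {K : Type} [Field K] (n : ℕ) :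
    Module.finrank K (homogeneousSubmodule (Fin 3) K n) = (n+2).choose 2 := by
  classical
  rw [homogeneousSubmodule_eq_finsupp_supported]
  have e : {d : Fin 3 →₀ ℕ | d.degree = n} = ((Finset.univ : Finset (Fin 3)).finsuppAntidiag n : Set _) := by
    ext d
    simp [Finset.mem_finsuppAntidiag, Finsupp.degree_eq_sum]
  rw [e]
  have h := Finset.card_finsuppAntidiag_nat_eq_choose (s := (Finset.univ : Finset (Fin 3))) n
  rw [(AddMonoidAlgebra.supportedEquivFinsupp (R := K) (S := K) _).finrank_eq, Module.finrank_finsupp_self]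
  rw [show Fintype.card ↑((Finset.univ.finsuppAntidiag n : Finset (Fin 3 →₀ ℕ)) : Set (Fin 3 →₀ ℕ)) = _ from Fintype.card_coe _, h]
  simp only [Finset.card_univ, Fintype.card_fin]
  rw [show 3 + n - 1 = n + 2 by omega, ← Nat.choose_symm_add]

instance finH {K : Type} [Field K] (σ : Type) [Finite σ] (n : ℕ) :
    FiniteDimensional K (homogeneousSubmodule σ K n) :=
  Module.Finite.iff_fg.2 (homogeneousSubmodule_fg σ K n)

section
variable {K : Type} [Field K] {σ : Type}

lemma hc_sum (b : MvPolynomial σ K) (N : ℕ) (hN : b.totalDegree < N) :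
    b = ∑ i ∈ Finset.range N, homogeneousComponent i b := by
  conv_lhs => rw [← sum_homogeneousComponent b]
  apply Finset.sum_subset
  · intro i; simp; omega
  · intro i _ hi
    apply homogeneousComponent_eq_zero
    simp at hi; omega

lemma hc_mul {C b : MvPolynomial σ K} {c : ℕ} (hC : C.IsHomogeneous c) (n : ℕ) :
    homogeneousComponent (c+n) (C*b) = C * homogeneousComponent n b := by
  conv_lhs => rw [hc_sum b (b.totalDegree + n + 1) (by omega)]
  rw [Finset.mul_sum, map_sum, Finset.sum_eq_single n]
  · exact homogeneousComponent_eq_self (hC.mul (homogeneousComponent_isHomogeneous n b))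
  · intro i _ hi
    rw [homogeneousComponent_of_mem (hC.mul (homogeneousComponent_isHomogeneous i b))]
    rw [if_neg (by omega)]
  · simp

lemma hc_mul_top (a b : MvPolynomial σ K) :
    homogeneousComponent (a.totalDegree + b.totalDegree) (a*b) =
      homogeneousComponent a.totalDegree a * homogeneousComponent b.totalDegree b := by
  conv_lhs => rw [show homogeneousComponent (a.totalDegree + b.totalDegree) (a*b) = homogeneousComponent (a.totalDegree + b.totalDegree) ((∑ i ∈ Finset.range (a.totalDegree + 1), homogeneousComponent i a)*b) by rw [← hc_sum a (a.totalDegree + 1) (by omega)]]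
  rw [Finset.sum_mul, map_sum, Finset.sum_eq_single a.totalDegree]
  · exact hc_mul (homogeneousComponent_isHomogeneous _ a) _
  · intro i hi hne
    have : i < a.totalDegree := by simp at hi; omega
    rw [show a.totalDegree + b.totalDegree = i + (a.totalDegree - i + b.totalDegree) by omega,
      hc_mul (homogeneousComponent_isHomogeneous _ a), homogeneousComponent_eq_zero _ b (by omega), mul_zero]
  · simp

lemma hom_eval_smul {n : ℕ} {f : MvPolynomial σ K} (hf : f.IsHomogeneous n) (c : K) (v : σ → K) :
    eval (c • v) f = c^n * eval v f := by
  rw [eval_eq, eval_eq, Finset.mul_sum]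
  apply Finset.sum_congr rfl
  intro d hd
  have := hf (mem_support_iff.1 hd)
  rw [Finsupp.weight_apply] at this
  simp only [Finsupp.sum, Pi.one_apply, smul_eq_mul, mul_one] at this
  simp only [Pi.smul_apply, smul_eq_mul, mul_pow, Finset.prod_mul_distrib, Finset.prod_pow_eq_pow_sum]
  rw [this]
  ring
end

variable {K : Type} [Field K]

/-- pairwise non proportional nonzero vectors -/
def Pts (S : Finset (Fin 3 → K)) : Prop :=
  ∀ p ∈ S, p ≠ 0 ∧ ∀ q ∈ S, p ≠ q → ∃ l : MvPolynomial (Fin 3) K, l.IsHomogeneous 1 ∧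
    eval p l = 0 ∧ eval q l ≠ 0

def Dep (t : ℕ) (S : Finset (Fin 3 → K)) (lam : (Fin 3 → K) → K) : Prop :=
  (∀ p ∈ S, lam p ≠ 0) ∧ ∀ f : MvPolynomial (Fin 3) K, f.IsHomogeneous t →
    ∑ p ∈ S, lam p * eval p f = 0

lemma Pts.mono {S T : Finset (Fin 3 → K)} (h : Pts S) (hT : T ⊆ S) : Pts T :=
  fun p hp => ⟨(h p (hT hp)).1, fun q hq => (h p (hT hp)).2 q (hT hq)⟩

open Classical in
lemma Dep.mul {i t n : ℕ} {S : Finset (Fin 3 → K)} {lam : (Fin 3 → K) → K} (h : Dep n S lam) (hit : i + t = n)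
    {g : MvPolynomial (Fin 3) K} (hg : g.IsHomogeneous i) :
    Dep t (S.filter (fun p => eval p g ≠ 0)) (fun p => lam p * eval p g) := by
  constructor
  · intro p hp
    simp at hp
    exact mul_ne_zero (h.1 p hp.1) hp.2
  · intro f hf
    have := h.2 (g*f) (hit ▸ hg.mul hf)
    refine Eq.trans ?_ this
    rw [Finset.sum_filter]
    apply Finset.sum_congr rfl
    intro p _
    split_ifs with hh
    · simp; ring
    · rw [not_not] at hh
      simp [hh]

/-- evaluation map -/
noncomputable def ev (n : ℕ) (S : Finset (Fin 3 → K)) : homogeneousSubmodule (Fin 3) K n →ₗ[K] (S → K) :=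
  LinearMap.pi (fun p => (aeval (p : Fin 3 → K)).toLinearMap ∘ₗ (Submodule.subtype _))

lemma ev_apply (n : ℕ) (S : Finset (Fin 3 → K)) (f) (p) : ev n S f p = eval (p : Fin 3 → K) (f : MvPolynomial (Fin 3) K) := by
  simp only [ev, LinearMap.pi_apply, LinearMap.comp_apply, Submodule.subtype_apply, AlgHom.toLinearMap_apply]
  rfl

lemma curve (n : ℕ) (T : Finset (Fin 3 → K)) (h : T.card < (n+2).choose 2) :
    ∃ f : MvPolynomial (Fin 3) K, f ≠ 0 ∧ f.IsHomogeneous n ∧ ∀ p ∈ T, eval p f = 0 := by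
  have h := LinearMap.ker_ne_bot_of_finrank_lt (f := ev n T) (by simpa [finrank_H] using h)
  obtain ⟨f, hf, hf0⟩ := Submodule.exists_mem_ne_zero_of_ne_bot h
  refine ⟨f, by simpa using hf0, f.2, fun p hp => ?_⟩
  rw [LinearMap.mem_ker] at hf
  simpa [ev_apply] using congrFun hf ⟨p, hp⟩

lemma orth {i j t : ℕ} (hij : i + j = t) {S : Finset (Fin 3 → K)} {lam : (Fin 3 → K) → K} (h : Dep t S lam) :
    Module.finrank K (LinearMap.range (ev i S)) + Module.finrank K (LinearMap.range (ev j S)) ≤ S.card := by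
  have h1 := Subspace.finrank_add_finrank_dualAnnihilator_eq (LinearMap.range (ev i S))
  rw [Module.finrank_pi, Fintype.card_coe] at h1
  rw [← h1]
  apply Nat.add_le_add_left
  let Φ : (S → K) →ₗ[K] Module.Dual K (S → K) :=
    { toFun := fun a => ∑ p : S, (lam p * a p) • LinearMap.proj p
      map_add' := by
        intro a b; simp only [Pi.add_apply, mul_add, add_smul, Finset.sum_add_distrib]
      map_smul' := by
        intro c a; simp only [Pi.smul_apply, smul_eq_mul, RingHom.id_apply, Finset.smul_sum, smul_smul]
        apply Finset.sum_congr rfl; intros; congr 1; ring }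
  have hΦ : Function.Injective Φ := by
    rw [← LinearMap.ker_eq_bot, LinearMap.ker_eq_bot']
    intro a ha
    classical
    funext p
    have := congrArg (fun φ => φ (Pi.single p 1)) ha
    simp [Φ, LinearMap.sum_apply, Pi.single_apply] at this
    exact this.resolve_left (h.1 p p.2)
  rw [← LinearMap.finrank_range_of_inj (f := Φ.comp (LinearMap.range (ev j S)).subtype)
    (hΦ.comp (Submodule.subtype_injective _))]
  apply Submodule.finrank_mono
  rintro _ ⟨⟨_, ⟨g, rfl⟩⟩, rfl⟩
  rw [Submodule.mem_dualAnnihilator]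
  rintro _ ⟨f, rfl⟩
  have := h.2 (f.1 * g.1) (hij ▸ f.2.mul g.2)
  rw [← Finset.sum_coe_sort] at this
  rw [← this]
  simp only [LinearMap.comp_apply, Submodule.subtype_apply, Φ, LinearMap.coe_mk, AddHom.coe_mk,
    LinearMap.sum_apply, LinearMap.smul_apply, LinearMap.proj_apply, smul_eq_mul, ev_apply, map_mul]
  apply Finset.sum_congr rfl; intros; ring

end S10

namespace S10
open MvPolynomial
variable {K : Type} [Field K]

lemma sepPoly (T : Finset (Fin 3 → K)) (q : Fin 3 → K) (hq : q ≠ 0)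
    (h : ∀ p ∈ T, ∃ l : MvPolynomial (Fin 3) K, l.IsHomogeneous 1 ∧ eval p l = 0 ∧ eval q l ≠ 0)
    (n : ℕ) (hn : T.card ≤ n) :
    ∃ f : MvPolynomial (Fin 3) K, f.IsHomogeneous n ∧ (∀ p ∈ T, eval p f = 0) ∧ eval q f ≠ 0 := by
  obtain ⟨i, hi⟩ := Function.ne_iff.1 hq
  choose! l hl using h
  refine ⟨(∏ p ∈ T, l p) * X i ^ (n - T.card), ?_, ?_, ?_⟩
  · have h1 : (∏ p ∈ T, l p).IsHomogeneous (∑ p ∈ T, 1) := IsHomogeneous.prod _ _ _ (fun p hp => (hl p hp).1)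
    have := h1.mul (isHomogeneous_X_pow (R := K) i (n - T.card))
    simp only [Finset.sum_const, smul_eq_mul, mul_one] at this
    rwa [show T.card + (n - T.card) = n by omega] at this
  · intro p hp
    rw [map_mul, map_prod, Finset.prod_eq_zero hp (hl p hp).2.1, zero_mul]
  · rw [map_mul, map_prod]
    refine mul_ne_zero (Finset.prod_ne_zero_iff.2 fun p hp => (hl p hp).2.2) ?_
    simpa using fun h => absurd h hi

lemma indep {t : ℕ} {S : Finset (Fin 3 → K)} {lam : (Fin 3 → K) → K} (hS : Pts S) (hne : S.Nonempty)
    (h : Dep t S lam) : t + 2 ≤ S.card := by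
  classical
  obtain ⟨q, hq⟩ := hne
  by_contra hlt
  obtain ⟨f, hf, hf0, hfq⟩ := sepPoly (S.erase q) q (hS q hq).1 (fun p hp => by
    rw [Finset.mem_erase] at hp
    exact (hS p hp.2).2 q hq hp.1) t (by rw [Finset.card_erase_of_mem hq]; omega)
  have := h.2 f hf
  rw [Finset.sum_eq_single q] at this
  · exact (mul_ne_zero (h.1 q hq) hfq) this
  · intro p hp hpq
    rw [hf0 p (Finset.mem_erase.2 ⟨hpq, hp⟩), mul_zero]
  · intro h; exact absurd hq h

lemma ev_surj {S : Finset (Fin 3 → K)} (hS : Pts S) {n : ℕ} (hn : S.card ≤ n) :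
    LinearMap.range (ev n S) = ⊤ := by
  classical
  rw [eq_top_iff, ← (Pi.basisFun K S).span_eq, Submodule.span_le]
  rintro _ ⟨⟨q, hq⟩, rfl⟩
  obtain ⟨f, hf, hf0, hfq⟩ := sepPoly (S.erase q) q (hS q hq).1 (fun p hp => by
    rw [Finset.mem_erase] at hp
    exact (hS p hp.2).2 q hq hp.1) n (by rw [Finset.card_erase_of_mem hq]; omega)
  refine ⟨(eval q f)⁻¹ • ⟨f, hf⟩, ?_⟩
  funext p
  rw [map_smul, Pi.smul_apply, ev_apply, Pi.basisFun_apply, Pi.single_apply]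
  split_ifs with hp
  · subst hp; simp [hfq]
  · rw [hf0 p]; simp
    exact Finset.mem_erase.2 ⟨fun h => hp (Subtype.ext h), p.2⟩

open Classical in
lemma two_disj {S : Finset (Fin 3 → K)} {f g : MvPolynomial (Fin 3) K}
    (h : ∀ p ∈ S, eval p f ≠ 0 → eval p g = 0) :
    (S.filter (fun p => eval p f ≠ 0)).card + (S.filter (fun p => eval p g ≠ 0)).card ≤ S.card := by
  rw [← Finset.card_union_of_disjoint]
  · apply Finset.card_le_card
    intro p hp
    simp at hp
    tauto
  · rw [Finset.disjoint_left]
    intro p hp hp'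
    simp at hp hp'
    exact hp'.2 (h p hp.1 hp.2)

open Classical in
lemma card_split (S : Finset (Fin 3 → K)) (f : MvPolynomial (Fin 3) K) :
    (S.filter (fun p => eval p f = 0)).card + (S.filter (fun p => eval p f ≠ 0)).card = S.card :=
  Finset.card_filter_add_card_filter_not _

lemma L1 (t : ℕ) : ∀ (S : Finset (Fin 3 → K)) (lam : (Fin 3 → K) → K), Pts S → Dep t S lam →
    S.card ≤ 2*t+1 → ∃ l : MvPolynomial (Fin 3) K, l ≠ 0 ∧ l.IsHomogeneous 1 ∧ ∀ p ∈ S, eval p l = 0 := by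
  classical
  induction t with
  | zero =>
    intro S lam hS h hc
    exact curve 1 S (by simp [Nat.choose]; omega)
  | succ t ih =>
    intro S lam hS h hc
    by_cases h2 : S.card ≤ 2
    · exact curve 1 S (by simp [Nat.choose]; omega)
    obtain ⟨T, hTS, hT⟩ := Finset.exists_subset_card_eq (show 2 ≤ S.card by omega)
    obtain ⟨l, hl0, hl1, hl⟩ := curve 1 T (by simp [Nat.choose]; omega)
    have hS1 := h.mul (i := 1) (t := t) (by omega) hl1
    have hs := card_split S l
    have hT2 : T.card ≤ (S.filter (fun p => eval p l = 0)).card :=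
      Finset.card_le_card (fun p hp => by simp [hTS hp, hl p hp])
    obtain ⟨l', hl0', hl1', hl'⟩ := ih _ _ (hS.mono (Finset.filter_subset _ _)) hS1 (by omega)
    have hS2 := h.mul (i := 1) (t := t) (by omega) hl1'
    rcases Finset.eq_empty_or_nonempty (S.filter (fun p => eval p l ≠ 0)) with he | hne
    · refine ⟨l, hl0, hl1, fun p hp => ?_⟩
      by_contra hh
      exact absurd (he ▸ Finset.mem_filter.2 ⟨hp, hh⟩) (Finset.notMem_empty p)
    rcases Finset.eq_empty_or_nonempty (S.filter (fun p => eval p l' ≠ 0)) with he' | hne'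
    · refine ⟨l', hl0', hl1', fun p hp => ?_⟩
      by_contra hh
      exact absurd (he' ▸ Finset.mem_filter.2 ⟨hp, hh⟩) (Finset.notMem_empty p)
    have a1 := indep (hS.mono (Finset.filter_subset _ _)) hne hS1
    have a2 := indep (hS.mono (Finset.filter_subset _ _)) hne' hS2
    have := two_disj (S := S) (f := l) (g := l') (fun p hp h => hl' p (by simp [hp, h]))
    omega

/-- multiplication by a form -/
noncomputable def mulH {c : ℕ} (C : MvPolynomial (Fin 3) K) (hC : C.IsHomogeneous c) (n N : ℕ) (h : c + n = N) :
    homogeneousSubmodule (Fin 3) K n →ₗ[K] homogeneousSubmodule (Fin 3) K N where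
  toFun f := ⟨C * f.1, h ▸ hC.mul f.2⟩
  map_add' f g := by ext1; simp [mul_add]
  map_smul' f g := by ext1; simp

lemma mulH_coe {c : ℕ} (C : MvPolynomial (Fin 3) K) (hC : C.IsHomogeneous c) (n N : ℕ) (h : c + n = N) (f) :
    (mulH C hC n N h f : MvPolynomial (Fin 3) K) = C * f.1 := rfl

lemma div_hom {c n : ℕ} {C b : MvPolynomial (Fin 3) K} (hC : C.IsHomogeneous c) (hb : b.IsHomogeneous (c+n))
    (h : C ∣ b) : ∃ b', b'.IsHomogeneous n ∧ b = C * b' := by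
  obtain ⟨b', rfl⟩ := h
  refine ⟨homogeneousComponent n b', homogeneousComponent_isHomogeneous _ _, ?_⟩
  rw [← hc_mul hC, homogeneousComponent_eq_self hb]

lemma choose3 (n : ℕ) : (n+5).choose 2 = (n+2).choose 2 + 3*n + 9 := by
  simp only [Nat.choose_succ_succ', Nat.choose_zero_right, Nat.choose_one_right, Nat.reduceAdd]
  ring_nf

lemma bezout {S : Finset (Fin 3 → K)} (hS : Pts S) {e : ℕ} {C G : MvPolynomial (Fin 3) K}
    (hC : C.IsHomogeneous 3) (hG : G.IsHomogeneous e) (hP : Prime C) (hCG : ¬ C ∣ G)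
    (hCS : ∀ p ∈ S, eval p C = 0) (hGS : ∀ p ∈ S, eval p G = 0) : S.card ≤ 3*e := by
  set n := S.card with hn
  have hj := ev_surj hS (n := n+e+3) (by omega)
  have r := LinearMap.finrank_range_add_finrank_ker (ev (n+e+3) S)
  rw [hj, finrank_top, Module.finrank_pi, Fintype.card_coe, finrank_H] at r
  let Ψ := (mulH C hC (n+e) (n+e+3) (by omega)).coprod (mulH G hG (n+3) (n+e+3) (by omega))
  let Θ := (-(mulH G hG n (n+e) (by omega))).prod (mulH C hC n (n+3) (by omega))
  have rΨ := LinearMap.finrank_range_add_finrank_ker Ψ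
  have k1 : LinearMap.range Ψ ≤ LinearMap.ker (ev (n+e+3) S) := by
    rintro _ ⟨⟨a, b⟩, rfl⟩
    rw [LinearMap.mem_ker]
    funext p
    rw [ev_apply]
    simp [Ψ, mulH_coe, hCS p p.2, hGS p p.2]
  have k2 : LinearMap.ker Ψ ≤ LinearMap.range Θ := by
    rintro ⟨a, b⟩ hab
    rw [LinearMap.mem_ker] at hab
    have hab' := congrArg Subtype.val hab
    simp [Ψ, mulH_coe] at hab'
    have hd : C ∣ b.1 := by
      have : C ∣ G * b.1 := ⟨-a.1, by linear_combination hab'⟩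
      exact (hP.dvd_or_dvd this).resolve_left hCG
    obtain ⟨b', hb', hbb⟩ := div_hom (n := n) hC (add_comm n 3 ▸ b.2 : IsHomogeneous _ (3+n)) hd
    refine ⟨⟨b', hb'⟩, ?_⟩
    have ha : a.1 = - (G * b') := by
      apply mul_left_cancel₀ hP.ne_zero
      rw [hbb] at hab'
      linear_combination hab'
    ext1 <;> ext1
    · simp [Θ, mulH_coe, ha]
    · simp [Θ, mulH_coe, hbb]
  have f1 := Submodule.finrank_mono k1
  have f2 := (Submodule.finrank_mono k2).trans (LinearMap.finrank_range_le Θ)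
  rw [Module.finrank_prod, finrank_H, finrank_H] at rΨ
  rw [finrank_H] at f2
  have c1 := choose3 (n+e)
  have c2 := choose3 n
  rw [show n + e + 3 + 2 = n+e+5 by ring] at r
  rw [show n + 3 + 2 = n+5 by ring] at rΨ
  omega

end S10

namespace S10
open MvPolynomial
variable {K : Type} [Field K]

lemma noconic_rank {S : Finset (Fin 3 → K)}
    (hno : ¬ ∃ Q : MvPolynomial (Fin 3) K, Q ≠ 0 ∧ Q.IsHomogeneous 2 ∧ ∀ p ∈ S, eval p Q = 0)
    {i : ℕ} (hi : i ≤ 2) : Module.finrank K (LinearMap.range (ev i S)) = (i+2).choose 2 := by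
  rw [LinearMap.finrank_range_of_inj, finrank_H]
  rw [← LinearMap.ker_eq_bot, LinearMap.ker_eq_bot']
  intro f hf
  by_contra hne
  apply hno
  refine ⟨f.1 * X 0 ^ (2 - i), mul_ne_zero (by simpa using hne) (pow_ne_zero _ (X_ne_zero _)), ?_, ?_⟩
  · have := (show f.1.IsHomogeneous i from f.2).mul (isHomogeneous_X_pow (R := K) 0 (2-i))
    rwa [show i + (2 - i) = 2 by omega] at this
  · intro p hp
    have := congrFun hf ⟨p, hp⟩
    rw [ev_apply] at this
    simp at this
    simp [this]

lemma cubic_prime {S : Finset (Fin 3 → K)} (h8 : 8 ≤ S.card) {C : MvPolynomial (Fin 3) K} (hC0 : C ≠ 0)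
    (hC : C.IsHomogeneous 3) (hCS : ∀ p ∈ S, eval p C = 0)
    (hA : ∀ l : MvPolynomial (Fin 3) K, l ≠ 0 → l.IsHomogeneous 1 → ∀ T ⊆ S, (∀ p ∈ T, eval p l = 0) → T.card ≤ 2)
    (hB : ∀ l : MvPolynomial (Fin 3) K, l ≠ 0 → l.IsHomogeneous 2 → ∀ T ⊆ S, (∀ p ∈ T, eval p l = 0) → T.card ≤ 5) :
    Prime C := by
  classical
  apply Irreducible.prime
  have key : ∀ A B : MvPolynomial (Fin 3) K, A * B = C → A.IsHomogeneous 1 → B.IsHomogeneous 2 → False := by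
    intro A B hAB h1 h2
    have hA0 : A ≠ 0 := by rintro rfl; exact hC0 (by rw [← hAB, zero_mul])
    have hB0 : B ≠ 0 := by rintro rfl; exact hC0 (by rw [← hAB, mul_zero])
    have a1 := hA A hA0 h1 (S.filter (fun p => eval p A = 0)) (Finset.filter_subset _ _) (by simp)
    have a2 := hB B hB0 h2 (S.filter (fun p => eval p A ≠ 0)) (Finset.filter_subset _ _) (by
      intro p hp
      simp at hp
      have := hCS p hp.1
      rw [← hAB, map_mul] at this
      exact (mul_eq_zero.1 this).resolve_left hp.2)
    have := card_split S A
    omega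
  constructor
  · intro hu
    have h0 : C.totalDegree = 0 := by
      obtain ⟨c, hc, rfl⟩ := (MvPolynomial.isUnit_iff_eq_C_of_isReduced).1 hu
      simp
    rw [hC.totalDegree hC0] at h0
    omega
  · intro a b hab
    have ha0 : a ≠ 0 := by rintro rfl; exact hC0 (by rw [hab, zero_mul])
    have hb0 : b ≠ 0 := by rintro rfl; exact hC0 (by rw [hab, mul_zero])
    have hdeg : a.totalDegree + b.totalDegree = 3 := by
      rw [← totalDegree_mul_of_isDomain ha0 hb0, ← hab, hC.totalDegree hC0]
    have htop := hc_mul_top a b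
    rw [hdeg, ← hab, homogeneousComponent_eq_self hC] at htop
    have unit0 : ∀ a : MvPolynomial (Fin 3) K, a ≠ 0 → a.totalDegree = 0 → IsUnit a := by
      intro a ha h
      rw [totalDegree_eq_zero_iff_eq_C.1 h] at ha ⊢
      exact (isUnit_iff_ne_zero.2 (by simpa using ha)).map (MvPolynomial.C (R := K) (σ := Fin 3))
    have ha := homogeneousComponent_isHomogeneous a.totalDegree a
    have hb := homogeneousComponent_isHomogeneous b.totalDegree b
    have cases : a.totalDegree = 0 ∨ b.totalDegree = 0 ∨ (a.totalDegree = 1 ∧ b.totalDegree = 2) ∨ (a.totalDegree = 2 ∧ b.totalDegree = 1) := by omega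
    rcases cases with h | h | h | h
    · exact Or.inl (unit0 a ha0 h)
    · exact Or.inr (unit0 b hb0 h)
    · rw [h.1, h.2] at htop; rw [h.1] at ha; rw [h.2] at hb
      exact (key _ _ htop.symm ha hb).elim
    · rw [h.1, h.2] at htop; rw [h.1] at ha; rw [h.2] at hb
      exact (key _ _ (by rw [mul_comm]; exact htop.symm) hb ha).elim

lemma cubic_nondvd {S : Finset (Fin 3 → K)} {e : ℕ} {C : MvPolynomial (Fin 3) K} (hC0 : C ≠ 0)
    (hC : C.IsHomogeneous 3) (h : Module.finrank K (LinearMap.range (ev (3+e) S)) < 3*(3+e)) :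
    ∃ G : MvPolynomial (Fin 3) K, G.IsHomogeneous (3+e) ∧ ¬ C ∣ G ∧ ∀ p ∈ S, eval p G = 0 := by
  by_contra hcon
  push Not at hcon
  have k : LinearMap.ker (ev (3+e) S) ≤ LinearMap.range (mulH C hC e (3+e) rfl) := by
    intro f hf
    by_cases hd : C ∣ f.1
    · obtain ⟨b', hb', hbb⟩ := div_hom (n := e) hC f.2 hd
      exact ⟨⟨b', hb'⟩, Subtype.ext hbb.symm⟩
    · obtain ⟨p, hp, hne⟩ := hcon f.1 f.2 hd
      have := congrFun (LinearMap.mem_ker.1 hf) ⟨p, hp⟩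
      rw [ev_apply] at this
      exact absurd this hne
  have f2 := (Submodule.finrank_mono k).trans (LinearMap.finrank_range_le _)
  have r := LinearMap.finrank_range_add_finrank_ker (ev (3+e) S)
  rw [finrank_H] at f2 r
  have := choose3 e
  rw [show 3 + e + 2 = e + 5 by ring] at r
  omega

lemma L2 (t : ℕ) : ∀ (S : Finset (Fin 3 → K)) (lam : (Fin 3 → K) → K), Pts S → Dep t S lam →
    S.card + 1 ≤ 3*t → ∃ Q : MvPolynomial (Fin 3) K, Q ≠ 0 ∧ Q.IsHomogeneous 2 ∧ ∀ p ∈ S, eval p Q = 0 := by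
  classical
  induction t using Nat.strong_induction_on with
  | _ t ih =>
  intro S lam hS h hc
  by_contra hno
  have hmono : ∀ f : MvPolynomial (Fin 3) K, Pts (S.filter (fun p => eval p f ≠ 0)) := fun f => hS.mono (Finset.filter_subset _ _)
  have hne_of : ∀ f : MvPolynomial (Fin 3) K, f ≠ 0 → f.IsHomogeneous 2 → (S.filter (fun p => eval p f ≠ 0)).Nonempty := by
    intro f hf0 hf
    by_contra he
    rw [Finset.not_nonempty_iff_eq_empty, Finset.filter_eq_empty_iff] at he
    exact hno ⟨f, hf0, hf, fun p hp => not_not.1 (he hp)⟩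
  by_cases ht : t ≤ 4
  · have h0 := noconic_rank hno (i := 0) (by omega)
    have h1 := noconic_rank hno (i := 1) (by omega)
    have h2 := noconic_rank hno (i := 2) (by omega)
    simp [Nat.choose] at h0 h1 h2
    interval_cases t
    · omega
    · have := orth (i := 0) (j := 1) rfl h; omega
    · have := orth (i := 1) (j := 1) rfl h; omega
    · have := orth (i := 1) (j := 2) rfl h; omega
    · have := orth (i := 2) (j := 2) rfl h; omega
  -- lines
  have hA : ∀ l : MvPolynomial (Fin 3) K, l ≠ 0 → l.IsHomogeneous 1 → ∀ T ⊆ S, (∀ p ∈ T, eval p l = 0) → T.card ≤ 2 := by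
    intro l hl0 hl T hT hTl
    by_contra h3
    have hT2 : T.card ≤ (S.filter (fun p => eval p l = 0)).card :=
      Finset.card_le_card (fun p hp => by simp [hT hp, hTl p hp])
    have hs := card_split S l
    have d1 := h.mul (i := 1) (t := t-1) (by omega) hl
    obtain ⟨Q, hQ0, hQ, hQS⟩ := ih (t-1) (by omega) _ _ (hmono l) d1 (by omega)
    have d2 := h.mul (i := 2) (t := t-2) (by omega) hQ
    have a2 := indep (hmono Q) (hne_of Q hQ0 hQ) d2
    have a1 : 2 * t ≤ (S.filter (fun p => eval p l ≠ 0)).card := by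
      by_contra hlt
      obtain ⟨l', hl0', hl', hlS'⟩ := L1 (t-1) _ _ (hmono l) d1 (by omega)
      obtain ⟨p, hp⟩ := hne_of (l*l') (mul_ne_zero hl0 hl0') (hl.mul hl')
      simp at hp
      exact hp.2.2 (hlS' p (by simp [hp]))
    have := two_disj (S := S) (f := l) (g := Q) (fun p hp h => hQS p (by simp [hp, h]))
    omega
  have hB : ∀ l : MvPolynomial (Fin 3) K, l ≠ 0 → l.IsHomogeneous 2 → ∀ T ⊆ S, (∀ p ∈ T, eval p l = 0) → T.card ≤ 5 := by
    intro Q hQ0 hQ T hT hTl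
    by_contra h3
    have hT2 : T.card ≤ (S.filter (fun p => eval p Q = 0)).card :=
      Finset.card_le_card (fun p hp => by simp [hT hp, hTl p hp])
    have hs := card_split S Q
    have d1 := h.mul (i := 2) (t := t-2) (by omega) hQ
    obtain ⟨Q', hQ0', hQ', hQS'⟩ := ih (t-2) (by omega) _ _ (hmono Q) d1 (by omega)
    have d2 := h.mul (i := 2) (t := t-2) (by omega) hQ'
    have key : ∀ Q : MvPolynomial (Fin 3) K, Q ≠ 0 → Q.IsHomogeneous 2 → 2 * t - 2 ≤ (S.filter (fun p => eval p Q ≠ 0)).card := by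
      intro Q hQ0 hQ
      by_contra hlt
      have d1 := h.mul (i := 2) (t := t-2) (by omega) hQ
      obtain ⟨l, hl0, hl, hlS⟩ := L1 (t-2) _ _ (hmono Q) d1 (by omega)
      have b1 := hA l hl0 hl _ (Finset.filter_subset _ _) hlS
      have b2 := indep (hmono Q) (hne_of Q hQ0 hQ) d1
      omega
    have := two_disj (S := S) (f := Q) (g := Q') (fun p hp h => hQS' p (by simp [hp, h]))
    have := key Q hQ0 hQ
    have := key Q' hQ0' hQ'
    omega
  have hbig : 2 * t + 2 ≤ S.card := by
    by_contra hlt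
    obtain ⟨l, hl0, hl, hlS⟩ := L1 t S lam hS h (by omega)
    obtain ⟨p, hp⟩ := hne_of (l*X 0) (mul_ne_zero hl0 (X_ne_zero _)) (hl.mul (isHomogeneous_X _ _))
    simp at hp
    exact hp.2.1 (hlS p hp.1)
  obtain ⟨T, hTS, hT⟩ := Finset.exists_subset_card_eq (show 9 ≤ S.card by omega)
  obtain ⟨C, hC0, hC, hCT⟩ := curve 3 T (by simp [Nat.choose]; omega)
  have hCS : ∀ p ∈ S, eval p C = 0 := by
    by_contra hcon
    push Not at hcon
    obtain ⟨p, hp, hpC⟩ := hcon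
    have hne : (S.filter (fun p => eval p C ≠ 0)).Nonempty := ⟨p, by simp [hp, hpC]⟩
    have hT2 : T.card ≤ (S.filter (fun p => eval p C = 0)).card :=
      Finset.card_le_card (fun p hp => by simp [hTS hp, hCT p hp])
    have hs := card_split S C
    have d1 := h.mul (i := 3) (t := t-3) (by omega) hC
    obtain ⟨Q, hQ0, hQ, hQS⟩ := ih (t-3) (by omega) _ _ (hmono C) d1 (by omega)
    have b1 := hB Q hQ0 hQ _ (Finset.filter_subset _ _) hQS
    obtain ⟨l, hl0, hl, hlS⟩ := L1 (t-3) _ _ (hmono C) d1 (by omega)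
    have b2 := hA l hl0 hl _ (Finset.filter_subset _ _) hlS
    have b3 := indep (hmono C) hne d1
    omega
  have hP := cubic_prime (by omega) hC0 hC hCS hA hB
  have key : ∀ e : ℕ, 3 ≤ e → 2 * e ≤ t + 1 → 3 * e ≤ Module.finrank K (LinearMap.range (ev e S)) := by
    intro e he het
    by_contra hlt
    obtain ⟨e, rfl⟩ := Nat.exists_eq_add_of_le he
    obtain ⟨G, hG, hCG, hGS⟩ := cubic_nondvd hC0 hC (S := S) (e := e) (by omega)
    have := bezout hS hC hG hP hCG hCS hGS
    omega
  have key2 : 6 ≤ Module.finrank K (LinearMap.range (ev 2 S)) := by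
    have h2 := noconic_rank hno (i := 2) (by omega)
    simp [Nat.choose] at h2
    omega
  have o := orth (i := t/2) (j := t - t/2) (by omega) h
  have k2 := key (t - t/2) (by omega) (by omega)
  have k1 : 3 * (t/2) ≤ Module.finrank K (LinearMap.range (ev (t/2) S)) := by
    by_cases h5 : t/2 = 2
    · rw [h5]; omega
    · exact key (t/2) (by omega) (by omega)
  omega

end S10

namespace S10
open MvPolynomial
variable {K : Type} [Field K]

noncomputable def rD : MvPolynomial (Fin 3) K →ₐ[K] Polynomial K := aeval ![1, Polynomial.X, 0]
noncomputable def rR : MvPolynomial (Fin 3) K →ₐ[K] Polynomial K := aeval ![Polynomial.X, 0, 1]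

lemma eval_rD (f : MvPolynomial (Fin 3) K) (t : K) : (rD f).eval t = eval ![1,t,0] f := by
  have : (Polynomial.aeval t).comp rD = (aeval ![1,t,0] : MvPolynomial (Fin 3) K →ₐ[K] K) := by
    apply MvPolynomial.algHom_ext
    intro i
    fin_cases i <;> simp [rD]
  have := congrArg (fun φ => φ f) this
  simpa [Polynomial.aeval_def, Polynomial.eval₂_eq_eval_map] using this

lemma eval_rR (f : MvPolynomial (Fin 3) K) (t : K) : (rR f).eval t = eval ![t,0,1] f := by
  have : (Polynomial.aeval t).comp rR = (aeval ![t,0,1] : MvPolynomial (Fin 3) K →ₐ[K] K) := by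
    apply MvPolynomial.algHom_ext
    intro i
    fin_cases i <;> simp [rR]
  have := congrArg (fun φ => φ f) this
  simpa [Polynomial.aeval_def, Polynomial.eval₂_eq_eval_map] using this

@[simp] lemma rD_X0 : rD (X 0 : MvPolynomial (Fin 3) K) = 1 := by simp [rD]
@[simp] lemma rD_X1 : rD (X 1 : MvPolynomial (Fin 3) K) = Polynomial.X := by simp [rD]
@[simp] lemma rD_X2 : rD (X 2 : MvPolynomial (Fin 3) K) = 0 := by simp [rD]
@[simp] lemma rR_X0 : rR (X 0 : MvPolynomial (Fin 3) K) = Polynomial.X := by simp [rR]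
@[simp] lemma rR_X1 : rR (X 1 : MvPolynomial (Fin 3) K) = 0 := by simp [rR]
@[simp] lemma rR_X2 : rR (X 2 : MvPolynomial (Fin 3) K) = 1 := by simp [rR]

lemma natDegree_aeval {σ : Type} {n : ℕ} {f : MvPolynomial σ K} (hf : f.IsHomogeneous n) (g : σ → Polynomial K)
    (hg : ∀ i, (g i).natDegree ≤ 1) : (aeval g f).natDegree ≤ n := by
  rw [aeval_def, eval₂_eq]
  apply Polynomial.natDegree_sum_le_of_forall_le
  intro d hd
  have hd := hf (mem_support_iff.1 hd)
  rw [Finsupp.weight_apply] at hd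
  simp only [Finsupp.sum, Pi.one_apply, smul_eq_mul, mul_one] at hd
  refine (Polynomial.natDegree_C_mul_le _ _).trans ?_
  refine (Polynomial.natDegree_prod_le _ _).trans ?_
  rw [← hd]
  apply Finset.sum_le_sum
  intro i _
  refine (Polynomial.natDegree_pow_le).trans ?_
  nlinarith [hg i]

lemma natDegree_rD {n : ℕ} {f : MvPolynomial (Fin 3) K} (hf : f.IsHomogeneous n) : (rD f).natDegree ≤ n := by
  apply natDegree_aeval hf
  intro i; fin_cases i <;> simp

lemma natDegree_rR {n : ℕ} {f : MvPolynomial (Fin 3) K} (hf : f.IsHomogeneous n) : (rR f).natDegree ≤ n := by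
  apply natDegree_aeval hf
  intro i; fin_cases i <;> simp

lemma factor_X {p : Polynomial K} (hp : p ≠ 0) : ∃ v ≤ p.natDegree, ∃ u : Polynomial K, p = Polynomial.X ^ v * u ∧ u.eval 0 ≠ 0 := by
  refine ⟨p.natTrailingDegree, Polynomial.natTrailingDegree_le_natDegree p, ?_⟩
  obtain ⟨u, hu⟩ := (Polynomial.X_pow_dvd_iff (n := p.natTrailingDegree)).2 (fun d hd => Polynomial.coeff_eq_zero_of_lt_natTrailingDegree hd)
  refine ⟨u, hu, ?_⟩
  rw [← Polynomial.coeff_zero_eq_eval_zero]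
  have : p.coeff p.natTrailingDegree ≠ 0 := Polynomial.trailingCoeff_nonzero_iff_nonzero.2 hp
  intro h
  apply this
  have h2 := congrArg (fun q => Polynomial.coeff q p.natTrailingDegree) hu
  simp only [Polynomial.coeff_X_pow_mul', if_pos le_rfl, Nat.sub_self, h] at h2
  exact h2

noncomputable def phi0 (w : ℕ) (f : MvPolynomial (Fin 3) K) : K :=
  (rD f).coeff (w-1) + eval ![1,0,0] f + (rR f).coeff (w-1)

lemma lin_sep (p q : Fin 3 → K) (i j : Fin 3) (h : q i * p j - q j * p i ≠ 0) :
    ∃ l : MvPolynomial (Fin 3) K, l.IsHomogeneous 1 ∧ eval p l = 0 ∧ eval q l ≠ 0 := by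
  refine ⟨C (p j) * X i - C (p i) * X j, ?_, ?_, ?_⟩
  · exact ((isHomogeneous_X _ i).C_mul _).sub ((isHomogeneous_X _ j).C_mul _)
  · simp; ring
  · simp; intro h'; apply h; linear_combination h'

open Classical in
lemma TD {w d i v : ℕ} (hw : 3 ≤ w) {M : Finset (Fin 3 → K)} {kap : (Fin 3 → K) → K}
    (hrel : ∀ f : MvPolynomial (Fin 3) K, f.IsHomogeneous d → phi0 w f = ∑ p ∈ M, kap p * eval p f)
    {g : MvPolynomial (Fin 3) K} (hg : g.IsHomogeneous i) (hgR : Polynomial.X ^ w ∣ rR g)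
    {u : Polynomial K} (hgD : rD g = Polynomial.X ^ v * u) (hu : u.eval 0 ≠ 0) (hv : v < w) :
    d + 2 + v ≤ (M.filter (fun p => eval p g ≠ 0)).card + i + w := by
  by_contra hlt
  have hO : (![1,0,0] : Fin 3 → K) ≠ 0 := fun h => by simpa using congrFun h 0
  obtain ⟨h, hh, hh0, hhO⟩ := sepPoly ((M.filter (fun p => eval p g ≠ 0)).filter (fun p => ¬ (p 1 = 0 ∧ p 2 = 0)))
    ![1,0,0] hO (by
      intro p hp
      simp only [Finset.mem_filter, not_and_or] at hp
      rcases hp.2 with h | h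
      · exact lin_sep p _ 0 1 (by simpa using h)
      · exact lin_sep p _ 0 2 (by simpa using h)) (d - (i + (w-1-v))) (by
      have := Finset.card_filter_le (M.filter (fun p => eval p g ≠ 0)) (fun p => ¬ (p 1 = 0 ∧ p 2 = 0))
      omega)
  have hf : (g * X 1 ^ (w-1-v) * h).IsHomogeneous d := by
    have := (hg.mul (isHomogeneous_X_pow (R := K) 1 (w-1-v))).mul hh
    rwa [show i + (w-1-v) + (d - (i + (w-1-v))) = d by omega] at this
  have hD : rD (g * X 1 ^ (w-1-v) * h) = Polynomial.X ^ (w-1) * (u * rD h) := by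
    rw [map_mul, map_mul, hgD, map_pow, rD_X1, show w - 1 = v + (w-1-v) by omega, pow_add]
    simp only [Nat.add_sub_cancel_left]
    ring
  have hc : (rD (g * X 1 ^ (w-1-v) * h)).coeff (w-1) = u.eval 0 * eval ![1,0,0] h := by
    rw [hD, Polynomial.coeff_X_pow_mul', if_pos le_rfl, Nat.sub_self, Polynomial.coeff_zero_eq_eval_zero, Polynomial.eval_mul, eval_rD]
  have he : eval ![1,0,0] (g * X 1 ^ (w-1-v) * h) = 0 := by
    rw [← eval_rD, hD]
    simp
    left; omega
  have hr : (rR (g * X 1 ^ (w-1-v) * h)).coeff (w-1) = 0 := by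
    have : Polynomial.X ^ w ∣ rR (g * X 1 ^ (w-1-v) * h) := by
      rw [mul_assoc, map_mul]; exact Dvd.dvd.mul_right hgR _
    exact Polynomial.X_pow_dvd_iff.1 this _ (by omega)
  have := hrel _ hf
  rw [phi0, hc, he, hr, Finset.sum_eq_zero] at this
  · simp only [add_zero] at this
    exact mul_ne_zero hu hhO this
  · intro p hp
    apply mul_eq_zero_of_right
    by_cases hgp : eval p g = 0
    · simp [hgp]
    by_cases hp12 : p 1 = 0 ∧ p 2 = 0
    · by_cases hv1 : w - 1 - v = 0
      · exfalso
        apply hgp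
        have : p = p 0 • ![1,0,0] := by
          funext j; fin_cases j <;> simp [hp12]
        rw [this, hom_eval_smul hg, ← eval_rD, hgD]
        simp
        right; left; omega
      · simp [hp12.1, hv1]
    · rw [map_mul, hh0 p, mul_zero]
      rw [Finset.mem_filter, Finset.mem_filter]
      exact ⟨⟨hp, hgp⟩, hp12⟩

open Classical in
lemma TR {w d i v : ℕ} (hw : 3 ≤ w) {M : Finset (Fin 3 → K)} {kap : (Fin 3 → K) → K}
    (hrel : ∀ f : MvPolynomial (Fin 3) K, f.IsHomogeneous d → phi0 w f = ∑ p ∈ M, kap p * eval p f)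
    {g : MvPolynomial (Fin 3) K} (hg : g.IsHomogeneous i) (hgD : rD g = 0)
    {u : Polynomial K} (hgR : rR g = Polynomial.X ^ v * u) (hu : u.eval 0 ≠ 0) (hv : v < w) :
    d + 2 + v ≤ (M.filter (fun p => eval p g ≠ 0)).card + i + w := by
  by_contra hlt
  have hO : (![0,0,1] : Fin 3 → K) ≠ 0 := fun h => by simpa using congrFun h 2
  obtain ⟨h, hh, hh0, hhO⟩ := sepPoly ((M.filter (fun p => eval p g ≠ 0)).filter (fun p => ¬ (p 0 = 0 ∧ p 1 = 0)))
    ![0,0,1] hO (by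
      intro p hp
      simp only [Finset.mem_filter, not_and_or] at hp
      rcases hp.2 with h | h
      · exact lin_sep p _ 2 0 (by simpa using h)
      · exact lin_sep p _ 2 1 (by simpa using h)) (d - (i + (w-1-v))) (by
      have := Finset.card_filter_le (M.filter (fun p => eval p g ≠ 0)) (fun p => ¬ (p 0 = 0 ∧ p 1 = 0))
      omega)
  have hf : (g * X 0 ^ (w-1-v) * h).IsHomogeneous d := by
    have := (hg.mul (isHomogeneous_X_pow (R := K) 0 (w-1-v))).mul hh
    rwa [show i + (w-1-v) + (d - (i + (w-1-v))) = d by omega] at this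
  have hR : rR (g * X 0 ^ (w-1-v) * h) = Polynomial.X ^ (w-1) * (u * rR h) := by
    rw [map_mul, map_mul, hgR, map_pow, rR_X0, show w - 1 = v + (w-1-v) by omega, pow_add]
    simp only [Nat.add_sub_cancel_left]
    ring
  have hc : (rR (g * X 0 ^ (w-1-v) * h)).coeff (w-1) = u.eval 0 * eval ![0,0,1] h := by
    rw [hR, Polynomial.coeff_X_pow_mul', if_pos le_rfl, Nat.sub_self, Polynomial.coeff_zero_eq_eval_zero, Polynomial.eval_mul, eval_rR]
  have hD : rD (g * X 0 ^ (w-1-v) * h) = 0 := by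
    rw [map_mul, map_mul, hgD]; simp
  have he : eval ![1,0,0] (g * X 0 ^ (w-1-v) * h) = 0 := by
    rw [← eval_rD, hD]
    simp
  have := hrel _ hf
  rw [phi0, hc, he, hD, Finset.sum_eq_zero] at this
  · simp only [add_zero, zero_add, Polynomial.coeff_zero] at this
    exact mul_ne_zero hu hhO this
  · intro p hp
    apply mul_eq_zero_of_right
    by_cases hgp : eval p g = 0
    · simp [hgp]
    by_cases hp12 : p 0 = 0 ∧ p 1 = 0
    · by_cases hv1 : w - 1 - v = 0
      · exfalso
        apply hgp
        have : p = p 2 • ![0,0,1] := by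
          funext j; fin_cases j <;> simp [hp12]
        rw [this, hom_eval_smul hg, ← eval_rR, hgR]
        simp
        right; left; omega
      · simp [hp12.1, hv1]
    · rw [map_mul, hh0 p, mul_zero]
      rw [Finset.mem_filter, Finset.mem_filter]
      exact ⟨⟨hp, hgp⟩, hp12⟩

lemma sub_dvd (g : Fin 3 → MvPolynomial (Fin 3) K) (j : Fin 3) (hg : ∀ i, X j ∣ X i - g i) (f : MvPolynomial (Fin 3) K) :
    X j ∣ f - aeval g f := by
  induction f using MvPolynomial.induction_on with
  | C a => simp
  | add p q hp hq =>
    have := dvd_add hp hq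
    rw [map_add]; convert! this using 1; ring
  | mul_X p i hp =>
    rw [map_mul, aeval_X]
    have : p * X i - aeval g p * g i = (p - aeval g p) * X i + aeval g p * (X i - g i) := by ring
    rw [this]
    exact dvd_add (hp.mul_right _) ((hg i).mul_left _)

lemma dvd_of_rD [Infinite K] {n : ℕ} {f : MvPolynomial (Fin 3) K} (hf : f.IsHomogeneous n) (h : rD f = 0) : X 2 ∣ f := by
  have h1 := sub_dvd (K := K) ![X 0, X 1, 0] 2 (by intro i; fin_cases i <;> simp) f
  have h2 : aeval ![X 0, X 1, 0] f = (0 : MvPolynomial (Fin 3) K) := by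
    have : X 0 * aeval ![X 0, X 1, 0] f = (0 : MvPolynomial (Fin 3) K) := by
      apply MvPolynomial.funext
      intro p
      have e : eval p (aeval ![X 0, X 1, 0] f : MvPolynomial (Fin 3) K) = eval ![p 0, p 1, 0] f := by
        have : (aeval p).comp (aeval ![X 0, X 1, 0]) = (aeval ![p 0,p 1,0] : MvPolynomial (Fin 3) K →ₐ[K] K) := by
          apply MvPolynomial.algHom_ext
          intro i
          fin_cases i <;> simp
        exact congrArg (fun φ => φ f) this
      rw [map_mul, e]
      simp only [eval_X, map_zero]
      by_cases hp : p 0 = 0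
      · simp [hp]
      · have : ![p 0, p 1, 0] = p 0 • ![1, p 1 / p 0, 0] := by
          funext j; fin_cases j <;> simp; field_simp
        rw [this, hom_eval_smul hf, ← eval_rD, h]; simp
    exact (mul_eq_zero.1 this).resolve_left (X_ne_zero _)
  rwa [h2, sub_zero] at h1

lemma dvd_of_rR [Infinite K] {n : ℕ} {f : MvPolynomial (Fin 3) K} (hf : f.IsHomogeneous n) (h : rR f = 0) : X 1 ∣ f := by
  have h1 := sub_dvd (K := K) ![X 0, 0, X 2] 1 (by intro i; fin_cases i <;> simp) f
  have h2 : aeval ![X 0, 0, X 2] f = (0 : MvPolynomial (Fin 3) K) := by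
    have : X 2 * aeval ![X 0, 0, X 2] f = (0 : MvPolynomial (Fin 3) K) := by
      apply MvPolynomial.funext
      intro p
      have e : eval p (aeval ![X 0, 0, X 2] f : MvPolynomial (Fin 3) K) = eval ![p 0, 0, p 2] f := by
        have : (aeval p).comp (aeval ![X 0, 0, X 2]) = (aeval ![p 0, 0, p 2] : MvPolynomial (Fin 3) K →ₐ[K] K) := by
          apply MvPolynomial.algHom_ext
          intro i
          fin_cases i <;> simp
        exact congrArg (fun φ => φ f) this
      rw [map_mul, e]
      simp only [eval_X, map_zero]
      by_cases hp : p 2 = 0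
      · simp [hp]
      · have : ![p 0, 0, p 2] = p 2 • ![p 0 / p 2, 0, 1] := by
          funext j; fin_cases j <;> simp; field_simp
        rw [this, hom_eval_smul hf, ← eval_rR, h]; simp
    exact (mul_eq_zero.1 this).resolve_left (X_ne_zero _)
  rwa [h2, sub_zero] at h1

lemma hom0_eval {c : MvPolynomial (Fin 3) K} (hc : c.IsHomogeneous 0) (h0 : c ≠ 0) (p : Fin 3 → K) : eval p c ≠ 0 := by
  have := totalDegree_eq_zero_iff_eq_C.1 (Nat.le_zero.1 hc.totalDegree_le)
  rw [this] at h0 ⊢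
  simpa using h0

end S10

namespace S10
open MvPolynomial
variable {K : Type} [Field K]

theorem core [Infinite K] {w d : ℕ} (hw : 3 ≤ w) (E B : Finset (Fin 3 → K)) (hd : 4*w + 2*E.card ≤ d + 1)
    (hP : ∀ S : Finset (Fin 3 → K), (∀ p ∈ S, p ∈ E ∨ p ∈ B) → Pts S)
    (mu lam : (Fin 3 → K) → K) (hmu : ∀ p ∈ E, mu p ≠ 0)
    (hE : ∀ p ∈ E, p 1 * p 2 ≠ 0)
    (hrel : ∀ f : MvPolynomial (Fin 3) K, f.IsHomogeneous d →
      phi0 w f + ∑ p ∈ E, mu p * eval p f = ∑ p ∈ B, lam p * eval p f) :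
    2*d+3+E.card ≤ B.card + 2*w := by
  classical
  set kap : (Fin 3 → K) → K := fun p => (if p ∈ B then lam p else 0) - (if p ∈ E then mu p else 0) with hkap
  set M := (E ∪ B).filter (fun p => kap p ≠ 0) with hM
  have hrelM : ∀ f : MvPolynomial (Fin 3) K, f.IsHomogeneous d → phi0 w f = ∑ p ∈ M, kap p * eval p f := by
    intro f hf
    have h1 := hrel f hf
    have h2 : ∑ p ∈ M, kap p * eval p f = ∑ p ∈ E ∪ B, kap p * eval p f := by
      rw [hM, Finset.sum_filter]
      apply Finset.sum_congr rfl
      intro p _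
      split_ifs with h
      · rfl
      · rw [not_not] at h; rw [h, zero_mul]
    have h3 : ∑ p ∈ E ∪ B, kap p * eval p f = ∑ p ∈ B, lam p * eval p f - ∑ p ∈ E, mu p * eval p f := by
      simp only [hkap, sub_mul, ite_mul, zero_mul, Finset.sum_sub_distrib]
      congr 1
      · rw [← Finset.sum_filter]; congr 1; ext p; simp; 
      · rw [← Finset.sum_filter]; congr 1; ext p; simp; 
    rw [h2, h3, ← h1]; ring
  set S := M.filter (fun p => p 1 * p 2 ≠ 0) with hS
  set BT := B.filter (fun p => p 1 * p 2 = 0) with hBT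
  set B' := B.filter (fun p => p 1 * p 2 ≠ 0) with hB'
  have hBcard : BT.card + B'.card = B.card := Finset.card_filter_add_card_filter_not _
  have hMmem : ∀ p ∈ M, p ∈ E ∨ p ∈ B := by
    intro p hp; simp [hM] at hp; exact hp.1
  have hSpts : Pts S := hP S (fun p hp => hMmem p (Finset.mem_filter.1 hp).1)
  have hSdep : Dep (d-2) S (fun p => kap p * (p 1 * p 2)) := by
    constructor
    · intro p hp
      rw [hS, Finset.mem_filter, hM, Finset.mem_filter] at hp
      exact mul_ne_zero hp.1.2 hp.2
    · intro f hf
      have := hrelM (X 1 * X 2 * f) (by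
        have := ((isHomogeneous_X K (1 : Fin 3)).mul (isHomogeneous_X K (2 : Fin 3))).mul hf
        rwa [show 1 + 1 + (d-2) = d by omega] at this)
      have h0 : phi0 w (X 1 * X 2 * f) = 0 := by simp [phi0]
      rw [h0] at this
      rw [this, hS, Finset.sum_filter]
      apply Finset.sum_congr rfl
      intro p _
      split_ifs with h
      · simp; ring
      · rw [not_not] at h
        simp only [map_mul, eval_X, h]; ring
  -- counting
  have hj1 : (S ∩ E).card + (S \ E).card = S.card := Finset.card_inter_add_card_sdiff S E
  have hj2 : (S ∩ E).card + (E \ S).card = E.card := by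
    rw [Finset.inter_comm]; exact Finset.card_inter_add_card_sdiff E S
  have hB'card : (S \ E).card + (E \ S).card ≤ B'.card := by
    rw [← Finset.card_union_of_disjoint]
    · apply Finset.card_le_card
      intro p hp
      rw [Finset.mem_union, Finset.mem_sdiff, Finset.mem_sdiff] at hp
      rw [hB', Finset.mem_filter]
      rcases hp with hp | hp
      · rw [hS, Finset.mem_filter] at hp
        exact ⟨(hMmem p hp.1.1).resolve_left hp.2, hp.1.2⟩
      · refine ⟨?_, hE p hp.1⟩
        by_contra hpB
        apply hp.2
        rw [hS, Finset.mem_filter, hM, Finset.mem_filter]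
        refine ⟨⟨by simp [hp.1], ?_⟩, hE p hp.1⟩
        simp [hkap, hpB, hp.1, hmu p hp.1]
    · rw [Finset.disjoint_left]
      intro p hp hp'
      rw [Finset.mem_sdiff] at hp hp'
      exact hp'.2 hp.1
  have hMT : ∀ g : MvPolynomial (Fin 3) K, (∀ p ∈ S, eval p g = 0) →
      M.filter (fun p => eval p g ≠ 0) ⊆ BT := by
    intro g hg p hp
    rw [Finset.mem_filter] at hp
    have hyz : p 1 * p 2 = 0 := by
      by_contra h
      exact hp.2 (hg p (by rw [hS, Finset.mem_filter]; exact ⟨hp.1, h⟩))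
    rw [hBT, Finset.mem_filter]
    refine ⟨(hMmem p hp.1).resolve_left (fun h => hE p h hyz), hyz⟩
  have hMT2 : ∀ l : MvPolynomial (Fin 3) K, (∀ p ∈ S, eval p l = 0) →
      (M.filter (fun p => eval p (X 1 * l) ≠ 0)).card + (M.filter (fun p => eval p (X 2 * l) ≠ 0)).card ≤ BT.card := by
    intro l hl
    have a1 := hMT (X 1 * l) (fun p hp => by simp [hl p hp])
    have a2 := hMT (X 2 * l) (fun p hp => by simp [hl p hp])
    rw [← Finset.card_union_of_disjoint]
    · exact Finset.card_le_card (Finset.union_subset a1 a2)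
    · rw [Finset.disjoint_left]
      intro p hp hp'
      have := a1 hp
      rw [hBT, Finset.mem_filter] at this
      simp at hp hp'
      exact (mul_ne_zero hp.2.1 hp'.2.1) this.2
  rcases Finset.eq_empty_or_nonempty S with hSe | hSne
  · have n1 := TD (g := X 1 * 1) (i := 1) (v := 1) (u := 1) hw hrelM (by simpa using isHomogeneous_X K (1 : Fin 3)) (by simp) (by simp) (by simp) (by omega)
    have n2 := TR (g := X 2 * 1) (i := 1) (v := 0) (u := 1) hw hrelM (by simpa using isHomogeneous_X K (2 : Fin 3)) (by simp) (by simp) (by simp) (by omega)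
    have n3 := hMT2 1 (by simp [hSe])
    rw [hSe] at hj1 hj2
    simp at hj1 hj2
    have : (E \ S).card = E.card := by rw [hSe]; simp
    omega
  have hSind := indep hSpts hSne hSdep
  obtain ⟨p0, hp0⟩ := hSne
  have hp0' : p0 1 * p0 2 ≠ 0 := (Finset.mem_filter.1 hp0).2
  by_cases hsmall : S.card ≤ 2 * (d-2) + 1
  · obtain ⟨l, hl0, hl, hlS⟩ := L1 (d-2) S _ hSpts hSdep hsmall
    have hDl : rD l ≠ 0 := by
      intro h
      obtain ⟨c, hc, rfl⟩ := div_hom (n := 0) (isHomogeneous_X K (2 : Fin 3)) hl (dvd_of_rD hl h)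
      have := hlS p0 hp0
      rw [map_mul, eval_X] at this
      rcases mul_eq_zero.1 this with h | h
      · exact hp0' (by rw [h, mul_zero])
      · exact hom0_eval hc (right_ne_zero_of_mul hl0) p0 h
    have hRl : rR l ≠ 0 := by
      intro h
      obtain ⟨c, hc, rfl⟩ := div_hom (n := 0) (isHomogeneous_X K (1 : Fin 3)) hl (dvd_of_rR hl h)
      have := hlS p0 hp0
      rw [map_mul, eval_X] at this
      rcases mul_eq_zero.1 this with h | h
      · exact hp0' (by rw [h, zero_mul])
      · exact hom0_eval hc (right_ne_zero_of_mul hl0) p0 h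
    obtain ⟨v, hv, u, hvu, hu⟩ := factor_X hDl
    obtain ⟨v', hv', u', hvu', hu'⟩ := factor_X hRl
    have b1 := natDegree_rD hl
    have b2 := natDegree_rR hl
    have n1 := TD (g := X 1 * l) (i := 1+1) (v := v+1) (u := u) hw hrelM ((isHomogeneous_X K (1 : Fin 3)).mul hl) (by simp) (by
      rw [map_mul, rD_X1, hvu]; ring) hu (by omega)
    have n2 := TR (g := X 2 * l) (i := 1+1) (v := v') (u := u') hw hrelM ((isHomogeneous_X K (2 : Fin 3)).mul hl) (by simp) (by
      rw [map_mul, rR_X2, hvu']; ring) hu' (by omega)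
    have n3 := hMT2 l hlS
    omega
  by_contra hcon
  obtain ⟨Q, hQ0, hQ, hQS⟩ := L2 (d-2) S _ hSpts hSdep (by omega)
  by_cases hDQ : rD Q = 0
  · have hRQ : rR Q ≠ 0 := by
      intro h
      obtain ⟨c, hc, rfl⟩ := div_hom (n := 1) (isHomogeneous_X K (2 : Fin 3)) hQ (dvd_of_rD hQ hDQ)
      rw [map_mul, rR_X2, one_mul] at h
      obtain ⟨c', hc', rfl⟩ := div_hom (n := 0) (isHomogeneous_X K (1 : Fin 3)) hc (dvd_of_rR hc h)
      have := hQS p0 hp0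
      simp only [map_mul, eval_X] at this
      rcases mul_eq_zero.1 this with h | h
      · exact hp0' (by rw [h, mul_zero])
      rcases mul_eq_zero.1 h with h | h
      · exact hp0' (by rw [h, zero_mul])
      · exact hom0_eval hc' (right_ne_zero_of_mul (right_ne_zero_of_mul hQ0)) p0 h
    obtain ⟨v, hv, u, hvu, hu⟩ := factor_X hRQ
    have b := natDegree_rR hQ
    have n1 := TR hw hrelM hQ hDQ hvu hu (by omega)
    have n2 := Finset.card_le_card (hMT Q hQS)
    omega
  · obtain ⟨v, hv, u, hvu, hu⟩ := factor_X hDQ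
    have b := natDegree_rD hQ
    have n1 := TD (g := Q * X 0 ^ w) hw hrelM (hQ.mul (isHomogeneous_X_pow 0 w)) (by simp) (u := u) (v := v) (by simp [hvu]) hu (by omega)
    have n2 := Finset.card_le_card (hMT (Q * X 0 ^ w) (fun p hp => by simp [hQS p hp]))
    omega

end S10

namespace S10
open MvPolynomial
variable {K : Type} [Field K]

open scoped LinearAlgebra.Projectivization in
open Classical in
noncomputable def nrm (v : Fin 3 → K) : Fin 3 → K :=
  if h : v = 0 then 0 else (Projectivization.mk K v h).rep

lemma nrm_ne {v : Fin 3 → K} (h : v ≠ 0) : nrm v ≠ 0 := by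
  rw [nrm, dif_neg h]; exact Projectivization.rep_nonzero _

lemma nrm_smul {v : Fin 3 → K} (h : v ≠ 0) : ∃ a : K, a ≠ 0 ∧ v = a • nrm v := by
  rw [nrm, dif_neg h]
  obtain ⟨a, ha⟩ := Projectivization.exists_smul_eq_mk_rep K v h
  refine ⟨(a⁻¹ : Kˣ), Units.ne_zero _, ?_⟩
  rw [← ha, Units.smul_def, smul_smul]; simp

lemma nrm_eq {v w : Fin 3 → K} (hv : v ≠ 0) (hw : w ≠ 0) (a : K) (h : v = a • w) : nrm v = nrm w := by
  rw [nrm, nrm, dif_neg hv, dif_neg hw]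
  congr 1
  rw [Projectivization.mk_eq_mk_iff']
  exact ⟨a, h.symm⟩

lemma nrm_pts (S : Finset (Fin 3 → K)) (hS : ∀ p ∈ S, ∃ v ≠ 0, nrm v = p) : Pts S := by
  intro p hp
  obtain ⟨v, hv, rfl⟩ := hS p hp
  refine ⟨nrm_ne hv, ?_⟩
  intro q hq hpq
  obtain ⟨v', hv', rfl⟩ := hS q hq
  by_contra hcon
  apply hpq
  have hall : ∀ i j, nrm v' i * nrm v j - nrm v' j * nrm v i = 0 := by
    intro i j
    by_contra h
    exact hcon (lin_sep _ _ i j h)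
  obtain ⟨j, hj⟩ := Function.ne_iff.1 (nrm_ne hv)
  simp only [Pi.zero_apply] at hj
  obtain ⟨a, ha, hva⟩ := nrm_smul hv
  obtain ⟨a', ha', hva'⟩ := nrm_smul hv'
  symm
  have e : nrm v' = (nrm v' j / nrm v j) • nrm v := by
    funext i
    have := hall i j
    simp only [Pi.smul_apply, smul_eq_mul]
    field_simp
    linear_combination this
  apply nrm_eq hv' hv (a' * (nrm v' j / nrm v j) * a⁻¹)
  set nv := nrm v
  set nv' := nrm v'
  rw [hva', hva]
  conv_lhs => rw [e]
  rw [smul_smul, smul_smul]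
  congr 1
  field_simp

theorem core' [Infinite K] {w d k n : ℕ} (hw : 3 ≤ w) (hd : 4*w + 2*k ≤ d + 1)
    (c : Fin k → Fin 3 → K) (hc : ∀ i, c i 1 * c i 2 ≠ 0)
    (hcc : ∀ i j, i ≠ j → ∀ a : K, c i ≠ a • c j)
    (b : Fin n → Fin 3 → K) (a : Fin n → K)
    (hrel : ∀ f : MvPolynomial (Fin 3) K, f.IsHomogeneous d →
      phi0 w f + ∑ i, eval (c i) f = ∑ j, a j * eval (b j) f) :
    2*d+3+k ≤ n + 2*w := by
  classical
  have hc0 : ∀ i, c i ≠ 0 := fun i h => hc i (by simp [h])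
  have hinj : Function.Injective (fun i => nrm (c i)) := by
    intro i j hij
    by_contra hne
    obtain ⟨x, hx, hx'⟩ := nrm_smul (hc0 i)
    obtain ⟨y, hy, hy'⟩ := nrm_smul (hc0 j)
    apply hcc i j hne (x * y⁻¹)
    conv_lhs => rw [hx']
    conv_rhs => rw [hy']
    simp only at hij
    rw [hij, smul_smul]
    congr 1
    field_simp
  choose x hx hx' using fun i => nrm_smul (hc0 i)
  have hbs : ∀ j, ∃ y : K, b j ≠ 0 → b j = y • nrm (b j) := by
    intro j
    by_cases h : b j = 0
    · exact ⟨0, fun h' => absurd h h'⟩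
    · obtain ⟨y, _, hy⟩ := nrm_smul h
      exact ⟨y, fun _ => hy⟩
  choose y hy using hbs
  set E : Finset (Fin 3 → K) := Finset.univ.image (fun i => nrm (c i)) with hE
  set J : Finset (Fin n) := Finset.univ.filter (fun j => b j ≠ 0) with hJ
  set B : Finset (Fin 3 → K) := J.image (fun j => nrm (b j)) with hB
  have hEc : E.card = k := by
    rw [hE, Finset.card_image_of_injective _ hinj]; simp
  have hBc : B.card ≤ n := by
    refine Finset.card_image_le.trans ?_
    refine (Finset.card_le_univ _).trans ?_
    simp
  have hEm : ∀ p ∈ E, ∃ i, nrm (c i) = p := by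
    intro p hp; simpa [hE] using hp
  have key := core hw E B (by rw [hEc]; exact hd) (by
    intro S hS
    apply nrm_pts
    intro p hp
    rcases hS p hp with h | h
    · obtain ⟨i, rfl⟩ := hEm p h
      exact ⟨_, hc0 i, rfl⟩
    · rw [hB, Finset.mem_image] at h
      obtain ⟨j, hj, rfl⟩ := h
      exact ⟨_, (Finset.mem_filter.1 hj).2, rfl⟩)
    (fun p => ∑ i with nrm (c i) = p, x i ^ d)
    (fun p => ∑ j ∈ J with nrm (b j) = p, a j * y j ^ d)
    (by
      intro p hp
      obtain ⟨i, rfl⟩ := hEm p hp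
      rw [Finset.sum_eq_single i]
      · exact pow_ne_zero _ (hx i)
      · intro j hj hji
        exact absurd (hinj (Finset.mem_filter.1 hj).2) hji
      · simp)
    (by
      intro p hp
      obtain ⟨i, rfl⟩ := hEm p hp
      intro h
      apply hc i
      rw [hx' i]
      simp only [Pi.smul_apply, smul_eq_mul]
      linear_combination x i ^ 2 * h)
    (by
      intro f hf
      have h1 : ∑ p ∈ E, (∑ i with nrm (c i) = p, x i ^ d) * eval p f = ∑ i, eval (c i) f := by
        rw [hE]
        apply Finset.sum_image'
        intro i _
        rw [Finset.sum_mul]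
        apply Finset.sum_congr rfl
        intro j hj
        rw [← (Finset.mem_filter.1 hj).2, ← hom_eval_smul hf, ← hx' j]
      have h2 : ∑ p ∈ B, (∑ j ∈ J with nrm (b j) = p, a j * y j ^ d) * eval p f = ∑ j ∈ J, a j * eval (b j) f := by
        rw [hB]
        apply Finset.sum_image'
        intro i _
        rw [Finset.sum_mul]
        apply Finset.sum_congr rfl
        intro j hj
        rw [Finset.mem_filter] at hj
        rw [← hj.2, mul_assoc, ← hom_eval_smul hf, ← hy j (Finset.mem_filter.1 hj.1).2]
      rw [h1, h2, hrel f hf]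
      symm
      apply Finset.sum_subset (Finset.subset_univ _)
      intro j _ hj
      have : b j = 0 := by simpa [hJ] using hj
      rw [this, ← zero_smul K (0 : Fin 3 → K), hom_eval_smul hf, zero_pow (by omega)]; ring)
  omega

/-- inverse of a unit jet -/
lemma modinv {w : ℕ} {u : Polynomial K} (hu : u.eval 0 ≠ 0) (q : ℕ → K) :
    ∃ p : ℕ → K, ∀ i < w, ((∑ j ∈ Finset.range w, Polynomial.C (p j) * Polynomial.X ^ j) * u).coeff i = q i := by
  have hcop : IsCoprime (Polynomial.X ^ w) u := by
    apply IsCoprime.pow_left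
    rw [Polynomial.irreducible_X.coprime_iff_not_dvd, Polynomial.X_dvd_iff, Polynomial.coeff_zero_eq_eval_zero]
    exact hu
  obtain ⟨a, b, hab⟩ := hcop
  set Q : Polynomial K := ∑ j ∈ Finset.range w, Polynomial.C (q j) * Polynomial.X ^ j with hQ
  refine ⟨fun j => (b*Q).coeff j, ?_⟩
  have hco : ∀ (q : ℕ → K), ∀ i < w, (∑ j ∈ Finset.range w, Polynomial.C (q j) * Polynomial.X ^ j).coeff i = q i := by
    intro q i hi
    simp [hi]
  have hd : Polynomial.X ^ w ∣ (∑ j ∈ Finset.range w, Polynomial.C ((b*Q).coeff j) * Polynomial.X ^ j) - b * Q := by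
    rw [Polynomial.X_pow_dvd_iff]
    intro i hi
    rw [Polynomial.coeff_sub, hco _ i hi, sub_self]
  obtain ⟨r, hr⟩ := hd
  intro i hi
  rw [← hco q i hi, ← hQ, ← sub_eq_zero, ← Polynomial.coeff_sub]
  refine Polynomial.X_pow_dvd_iff.1 ⟨r * u - a * Q, ?_⟩ i hi
  linear_combination u * hr + Q * hab

lemma jets_surj [Infinite K] {w k n : ℕ} (hw : 2 ≤ w) (hn : 2*w+k ≤ n+1)
    (c : Fin k → Fin 3 → K) (hc : ∀ i, c i 1 * c i 2 ≠ 0)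
    (hcc : ∀ i j, i ≠ j → ∀ a : K, c i ≠ a • c j) (al be : ℕ → K) (ga : Fin k → K) :
    ∃ f : MvPolynomial (Fin 3) K, f.IsHomogeneous n ∧ (∀ i < w, (rD f).coeff i = al i) ∧
      (∀ i < w, (rR f).coeff i = be i) ∧ ∀ e, eval (c e) f = ga e := by
  classical
  have hcard : (Finset.univ.image c).card ≤ k := Finset.card_image_le.trans (by simp)
  have hO : (![1,0,0] : Fin 3 → K) ≠ 0 := fun h => by simpa using congrFun h 0
  have hO' : (![0,0,1] : Fin 3 → K) ≠ 0 := fun h => by simpa using congrFun h 2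
  have hD : ∃ f : MvPolynomial (Fin 3) K, f.IsHomogeneous n ∧ (∀ i < w, (rD f).coeff i = al i) ∧
      (∀ i < w, (rR f).coeff i = 0) ∧ ∀ e, eval (c e) f = 0 := by
    obtain ⟨h, hh, hh0, hhO⟩ := sepPoly (Finset.univ.image c) ![1,0,0] hO (by
      intro p hp
      obtain ⟨e, _, rfl⟩ := Finset.mem_image.1 hp
      exact lin_sep _ _ 0 1 (by simpa using left_ne_zero_of_mul (hc e))) (n - w - (w-1)) (by omega)
    obtain ⟨p, hp⟩ := modinv (w := w) (u := rD h) (by rwa [eval_rD]) al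
    refine ⟨(∑ j ∈ Finset.range w, C (p j) * (X 0 ^ (w-1-j) * X 1 ^ j)) * (X 0 ^ w * h), ?_, ?_, ?_, ?_⟩
    · have h1 : (∑ j ∈ Finset.range w, C (p j) * (X 0 ^ (w-1-j) * X 1 ^ j) : MvPolynomial (Fin 3) K).IsHomogeneous (w-1) := by
        apply IsHomogeneous.sum
        intro j hj
        apply IsHomogeneous.C_mul
        have := (isHomogeneous_X_pow (R := K) (0 : Fin 3) (w-1-j)).mul (isHomogeneous_X_pow (R := K) (1 : Fin 3) j)
        rwa [show w-1-j+j = w-1 by rw [Finset.mem_range] at hj; omega] at this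
      have := h1.mul ((isHomogeneous_X_pow (R := K) (0 : Fin 3) w).mul hh)
      rwa [show w - 1 + (w + (n - w - (w-1))) = n by omega] at this
    · intro i hi
      rw [← hp i hi, map_mul]
      simp [map_sum, rD]
    · intro i hi
      refine Polynomial.X_pow_dvd_iff.1 ?_ i hi
      simp only [map_mul, map_pow, rR_X0]
      exact Dvd.dvd.mul_left (Dvd.intro _ rfl) _
    · intro e
      rw [map_mul, map_mul, hh0 (c e) (by simp)]; simp
  have hR : ∃ f : MvPolynomial (Fin 3) K, f.IsHomogeneous n ∧ (∀ i < w, (rD f).coeff i = 0) ∧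
      (∀ i < w, (rR f).coeff i = be i) ∧ ∀ e, eval (c e) f = 0 := by
    obtain ⟨h, hh, hh0, hhO⟩ := sepPoly (Finset.univ.image c) ![0,0,1] hO' (by
      intro p hp
      obtain ⟨e, _, rfl⟩ := Finset.mem_image.1 hp
      exact lin_sep _ _ 2 1 (by simpa using left_ne_zero_of_mul (hc e))) (n - 1 - (w-1)) (by omega)
    obtain ⟨p, hp⟩ := modinv (w := w) (u := rR h) (by rwa [eval_rR]) be
    refine ⟨(∑ j ∈ Finset.range w, C (p j) * (X 2 ^ (w-1-j) * X 0 ^ j)) * (X 2 * h), ?_, ?_, ?_, ?_⟩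
    · have h1 : (∑ j ∈ Finset.range w, C (p j) * (X 2 ^ (w-1-j) * X 0 ^ j) : MvPolynomial (Fin 3) K).IsHomogeneous (w-1) := by
        apply IsHomogeneous.sum
        intro j hj
        apply IsHomogeneous.C_mul
        have := (isHomogeneous_X_pow (R := K) (2 : Fin 3) (w-1-j)).mul (isHomogeneous_X_pow (R := K) (0 : Fin 3) j)
        rwa [show w-1-j+j = w-1 by rw [Finset.mem_range] at hj; omega] at this
      have := h1.mul ((isHomogeneous_X K (2 : Fin 3)).mul hh)
      rwa [show w - 1 + (1 + (n - 1 - (w-1))) = n by omega] at this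
    · intro i hi
      simp [map_mul]
    · intro i hi
      rw [← hp i hi, map_mul]
      simp [map_sum, rR]
    · intro e
      rw [map_mul, map_mul, hh0 (c e) (by simp)]; simp
  have hE : ∀ e, ∃ f : MvPolynomial (Fin 3) K, f.IsHomogeneous n ∧ (rD f = 0) ∧
      (rR f = 0) ∧ ∀ e', eval (c e') f = if e' = e then 1 else 0 := by
    intro e
    have hc0 : c e ≠ 0 := fun h => hc e (by simp [h])
    obtain ⟨h, hh, hh0, hhO⟩ := sepPoly ((Finset.univ.erase e).image c) (c e) hc0 (by
      intro p hp
      obtain ⟨e', he', rfl⟩ := Finset.mem_image.1 hp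
      have hne : e ≠ e' := fun h => by simp [h] at he'
      by_contra hcon
      have hall : ∀ i j, c e i * c e' j - c e j * c e' i = 0 := by
        intro i j
        by_contra h
        exact hcon (lin_sep _ _ i j h)
      have h1 : c e' 1 ≠ 0 := left_ne_zero_of_mul (hc e')
      apply hcc e e' hne (c e 1 / c e' 1)
      funext i
      have := hall i 1
      simp only [Pi.smul_apply, smul_eq_mul]
      field_simp
      linear_combination this) (n - 2) (by
        refine Finset.card_image_le.trans ?_
        rw [Finset.card_erase_of_mem (Finset.mem_univ _)]
        simp; omega)
    refine ⟨C ((c e 1 * c e 2 * eval (c e) h)⁻¹) * (X 1 * X 2 * h), ?_, ?_, ?_, ?_⟩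
    · apply IsHomogeneous.C_mul
      have := ((isHomogeneous_X K (1 : Fin 3)).mul (isHomogeneous_X K (2 : Fin 3))).mul hh
      rwa [show 1 + 1 + (n-2) = n by omega] at this
    · simp
    · simp
    · intro e'
      split_ifs with hee
      · subst hee
        simp only [map_mul, eval_C, eval_X]
        exact inv_mul_cancel₀ (mul_ne_zero (hc _) hhO)
      · rw [map_mul, map_mul, hh0 (c e')]
        · simp
        · exact Finset.mem_image.2 ⟨e', by simp [hee], rfl⟩
  obtain ⟨fD, d0, d1, d2, d3⟩ := hD
  obtain ⟨fR, r0, r1, r2, r3⟩ := hR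
  choose fE e0 e1 e2 e3 using hE
  refine ⟨fD + fR + ∑ e, C (ga e) * fE e, ?_, ?_, ?_, ?_⟩
  · exact (d0.add r0).add (IsHomogeneous.sum _ _ _ fun e _ => (e0 e).C_mul _)
  · intro i hi
    simp [map_sum, e1, d1 i hi, r1 i hi]
  · intro i hi
    simp [map_sum, e2, d2 i hi, r2 i hi]
  · intro e
    simp [map_sum, e3, d3 e, r3 e]

end S10

namespace S10
open MvPolynomial
variable {K : Type} [Field K]

noncomputable def phi3 (w : ℕ) {k : ℕ} (c : Fin k → Fin 3 → K) (f : MvPolynomial (Fin 3) K) : K :=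
  phi0 w f + ∑ e, eval (c e) f

lemma coeff_delta {w i0 : ℕ} (p q : Polynomial K) (h0 : i0 < w) (hp : ∀ i < w, p.coeff i = if i = i0 then 1 else 0) :
    (p*q).coeff (w-1) = q.coeff (w-1-i0) := by
  rw [Polynomial.coeff_mul, Finset.sum_eq_single (i0, w-1-i0)]
  · simp [hp i0 h0]
  · rintro ⟨i, j⟩ hij hne
    rw [Finset.HasAntidiagonal.mem_antidiagonal] at hij
    simp only at hij ⊢
    rw [hp i (by omega), if_neg, zero_mul]
    rintro rfl
    apply hne
    congr; omega
  · intro h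
    exfalso; apply h; rw [Finset.HasAntidiagonal.mem_antidiagonal]; simp; omega

lemma coeff_zeroj {w : ℕ} (hw : 0 < w) (p q : Polynomial K) (hp : ∀ i < w, p.coeff i = 0) :
    (p*q).coeff (w-1) = 0 := by
  rw [Polynomial.coeff_mul]
  apply Finset.sum_eq_zero
  rintro ⟨i, j⟩ hij
  rw [Finset.HasAntidiagonal.mem_antidiagonal] at hij
  simp only at hij ⊢
  rw [hp i (by omega), zero_mul]

lemma evalO (f : MvPolynomial (Fin 3) K) : eval ![1,0,0] f = (rD f).coeff 0 := by
  rw [Polynomial.coeff_zero_eq_eval_zero, eval_rD]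

lemma phi3_mul (w : ℕ) {k : ℕ} (c : Fin k → Fin 3 → K) (f g : MvPolynomial (Fin 3) K) :
    phi3 w c (f*g) = ((rD f * rD g).coeff (w-1) + (rD f).coeff 0 * (rD g).coeff 0 + (rR f * rR g).coeff (w-1))
      + ∑ e, eval (c e) f * eval (c e) g := by
  simp [phi3, phi0, evalO, Polynomial.mul_coeff_zero]

lemma catlem [Infinite K] {w k n n' : ℕ} (hw : 2 ≤ w) (hn : 2*w+k ≤ n+1) (hn' : 2*w+k ≤ n'+1)
    (c : Fin k → Fin 3 → K) (hc : ∀ i, c i 1 * c i 2 ≠ 0)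
    (hcc : ∀ i j, i ≠ j → ∀ a : K, c i ≠ a • c j) :
    ∃ f g : Fin w ⊕ Fin w ⊕ Fin k → MvPolynomial (Fin 3) K, (∀ a, (f a).IsHomogeneous n) ∧
      (∀ a, (g a).IsHomogeneous n') ∧ ∀ a b, phi3 w c (f a * g b) = if a = b then 1 else 0 := by
  classical
  have F : ∀ a : Fin w ⊕ Fin w ⊕ Fin k, ∃ f : MvPolynomial (Fin 3) K, f.IsHomogeneous n ∧
      (∀ i < w, (rD f).coeff i = Sum.elim (fun a => if i = a.val then 1 else 0) (fun _ => 0) a) ∧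
      (∀ i < w, (rR f).coeff i = Sum.elim (fun _ => 0) (Sum.elim (fun a => if i = a.val then 1 else 0) (fun _ => 0)) a) ∧
      (∀ e, eval (c e) f = Sum.elim (fun _ => 0) (Sum.elim (fun _ => 0) (fun a => if e = a then 1 else 0)) a) :=
    fun a => jets_surj hw hn c hc hcc _ _ _
  have G : ∀ a : Fin w ⊕ Fin w ⊕ Fin k, ∃ f : MvPolynomial (Fin 3) K, f.IsHomogeneous n' ∧
      (∀ i < w, (rD f).coeff i = Sum.elim (fun a => (if i = w-1-a.val then 1 else 0) -
          if i = w - 1 ∧ a.val = w-1 then 1 else 0) (fun _ => 0) a) ∧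
      (∀ i < w, (rR f).coeff i = Sum.elim (fun _ => 0) (Sum.elim (fun a => if i = w-1-a.val then 1 else 0) (fun _ => 0)) a) ∧
      (∀ e, eval (c e) f = Sum.elim (fun _ => 0) (Sum.elim (fun _ => 0) (fun a => if e = a then 1 else 0)) a) :=
    fun a => jets_surj hw hn' c hc hcc _ _ _
  choose f f0 f1 f2 f3 using F
  choose g g0 g1 g2 g3 using G
  refine ⟨f, g, f0, g0, ?_⟩
  intro a b
  rw [phi3_mul]
  rcases a with i | i | e
  · rw [coeff_delta (i0 := i) _ _ i.2 (by simpa using f1 (Sum.inl i)),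
      coeff_zeroj (by omega) _ _ (by simpa using f2 (Sum.inl i)), f1 _ 0 (by omega),
      g1 _ _ (by omega), g1 _ _ (by omega)]
    simp only [f3, Sum.elim_inl, zero_mul, Finset.sum_const_zero]
    rcases b with j | j | e'
    · simp only [Sum.elim_inl, Sum.inl.injEq, Fin.ext_iff]
      have := i.2; have := j.2
      split_ifs <;> first | omega | simp
    · simp
    · simp
  · rw [coeff_delta (i0 := i) (rR _) _ i.2 (by simpa using f2 (Sum.inr (Sum.inl i))),
      coeff_zeroj (by omega) _ _ (by simpa using f1 (Sum.inr (Sum.inl i))), f1 _ 0 (by omega),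
      g2 _ _ (by omega)]
    simp only [f3, Sum.elim_inl, Sum.elim_inr, zero_mul, Finset.sum_const_zero]
    rcases b with j | j | e'
    · simp
    · simp only [Sum.elim_inl, Sum.elim_inr, Sum.inl.injEq, Sum.inr.injEq, Fin.ext_iff]
      have := i.2; have := j.2
      split_ifs <;> first | omega | simp
    · simp
  · rw [coeff_zeroj (by omega) (rR _) _ (by simpa using f2 (Sum.inr (Sum.inr e))),
      coeff_zeroj (by omega) _ _ (by simpa using f1 (Sum.inr (Sum.inr e))), f1 _ 0 (by omega)]
    rcases b with j | j | e'
    · simp [g3]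
    · simp [g3]
    · simp [f3, g3, eq_comm]
end S10

namespace S10
open MvPolynomial
variable {K : Type} [Field K]

/-- substitution along a linear map -/
noncomputable def sub {σ τ : Type} [Fintype σ] [DecidableEq σ] (L : (σ → K) →ₗ[K] (τ → K)) :
    MvPolynomial τ K →ₐ[K] MvPolynomial σ K :=
  aeval (fun t => ∑ i, C (L (Pi.single i 1) t) * X i)

section
variable {σ τ : Type} [Fintype σ] [DecidableEq σ] (L : (σ → K) →ₗ[K] (τ → K))

lemma eval_sub (f : MvPolynomial τ K) (v : σ → K) : eval v (sub L f) = eval (L v) f := by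
  have : (aeval v : MvPolynomial σ K →ₐ[K] K).comp (sub L) = aeval (L v) := by
    apply MvPolynomial.algHom_ext
    intro t
    simp only [sub, AlgHom.comp_apply, aeval_X, map_sum, map_mul, aeval_C, Algebra.algebraMap_self, RingHom.id_apply]
    conv_rhs => rw [LinearMap.pi_apply_eq_sum_univ L v]
    simp only [Finset.sum_apply, Pi.smul_apply, smul_eq_mul]
    apply Finset.sum_congr rfl
    intro i _
    rw [mul_comm]
    have : (Pi.single i 1 : σ → K) = fun j => if i = j then 1 else 0 := by
      funext j
      simp [Pi.single_apply, eq_comm]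
    rw [this]
  have := congrArg (fun φ => φ f) this
  simpa [aeval_eq_eval] using this

lemma sub_hom {n : ℕ} {f : MvPolynomial τ K} (hf : f.IsHomogeneous n) : (sub L f).IsHomogeneous n := by
  have := hf.aeval (fun t => ∑ i, C (L (Pi.single i 1) t) * X i) (n := 1) (by
    intro t
    apply IsHomogeneous.sum
    intro i _
    exact (isHomogeneous_X K i).C_mul _)
  rwa [one_mul] at this

end

variable {m : ℕ}

lemma nu_apply (d : ℕ) (v : Fin (m+1) → K) (f : Hd K m d) : nu d v f = eval v (f : PR K m) := by
  simp [nu, aeval_eq_eval]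

lemma nu_smul (d : ℕ) (c : K) (v : Fin (m+1) → K) : nu d (c • v) = c ^ d • nu d v := by
  ext f
  rw [nu_apply, LinearMap.smul_apply, nu_apply, hom_eval_smul f.2, smul_eq_mul]

lemma nu_ne (d : ℕ) {v : Fin (m+1) → K} (hv : v ≠ 0) : nu d v ≠ 0 := by
  obtain ⟨i, hi⟩ := Function.ne_iff.1 hv
  intro h
  have := congrArg (fun φ => φ ⟨X i ^ d, isHomogeneous_X_pow i d⟩) h
  simp only [nu_apply, map_pow, eval_X, LinearMap.zero_apply] at this
  exact pow_ne_zero d hi this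

lemma rep_mk {V : Type} [AddCommGroup V] [Module K V] (v : V) (hv : v ≠ 0) :
    ∃ a : K, a ≠ 0 ∧ (Projectivization.mk K v hv).rep = a • v := by
  obtain ⟨a, ha⟩ := Projectivization.exists_smul_eq_mk_rep K v hv
  exact ⟨a, Units.ne_zero _, ha.symm⟩

lemma x_rep {d : ℕ} {Q : PN K m d} (hQ : Q ∈ XSet K m d) : ∃ (v : Fin (m+1) → K) (a : K), Q.rep = a • nu d v := by
  obtain ⟨p, hp⟩ := hQ
  have : Q.rep ∈ Q.submodule := by rw [Projectivization.submodule_eq]; exact Submodule.mem_span_singleton_self _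
  rw [hp, Submodule.mem_span_singleton] at this
  obtain ⟨a, ha⟩ := this
  exact ⟨_, a, ha.symm⟩

lemma span_sum {d : ℕ} (S : Finset (PN K m d)) (hS : (S : Set (PN K m d)) ⊆ XSet K m d) {ψ : Module.Dual K (Hd K m d)}
    (h : ψ ∈ Submodule.span K (Projectivization.rep '' (S : Set (PN K m d)))) :
    ∃ (b : Fin S.card → Fin (m+1) → K) (a : Fin S.card → K), ψ = ∑ j, a j • nu d (b j) := by
  rw [Submodule.mem_span_image_finset_iff_exists_fun] at h
  obtain ⟨c, hc⟩ := h
  have := fun q : S => x_rep (hS q.2)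
  choose v a hva using this
  refine ⟨fun j => v (S.equivFin.symm j), fun j => c (S.equivFin.symm j) * a (S.equivFin.symm j), ?_⟩
  rw [← hc, Equiv.sum_comp S.equivFin.symm (fun q => (c q * a q) • nu d (v q))]
  apply Finset.sum_congr rfl
  intro q _
  rw [hva, smul_smul]

lemma sum_span {d : ℕ} (hd : 0 < d) {ι : Type} [Fintype ι] (a : ι → K) (v : ι → Fin (m+1) → K) :
    ∃ S : Finset (PN K m d), (S : Set (PN K m d)) ⊆ XSet K m d ∧ S.card ≤ Fintype.card ι ∧
      ∑ j, a j • nu d (v j) ∈ Submodule.span K (Projectivization.rep '' (S : Set (PN K m d))) := by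
  classical
  refine ⟨Finset.univ.image (fun j : {j // v j ≠ 0} => Projectivization.mk K (nu d (v j)) (nu_ne d j.2)), ?_, ?_, ?_⟩
  · intro Q hQ
    simp only [Finset.coe_image, Finset.coe_univ, Set.image_univ, Set.mem_range] at hQ
    obtain ⟨j, rfl⟩ := hQ
    refine ⟨Projectivization.mk K (v j) j.2, ?_⟩
    obtain ⟨x, hx, hx'⟩ := rep_mk (K := K) (v j) j.2
    rw [hx', nu_smul, Projectivization.submodule_mk]
    exact (Submodule.span_singleton_smul_eq (IsUnit.mk0 _ (pow_ne_zero d hx)) _).symm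
  · exact Finset.card_image_le.trans (by rw [Finset.card_univ]; exact Fintype.card_subtype_le _)
  · apply Submodule.sum_mem
    intro j _
    apply Submodule.smul_mem
    by_cases hj : v j = 0
    · have h0 : nu d (v j) = 0 := by
        rw [hj, show (0 : Fin (m+1) → K) = (0:K) • 0 by simp, nu_smul, zero_pow hd.ne', zero_smul]
      rw [h0]
      exact Submodule.zero_mem _
    · obtain ⟨x, hx, hx'⟩ := rep_mk (K := K) (nu d (v j)) (nu_ne d hj)
      have : nu d (v j) = x⁻¹ • (Projectivization.mk K (nu d (v j)) (nu_ne d hj)).rep := by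
        rw [hx', smul_smul, inv_mul_cancel₀ hx, one_smul]
      rw [this]
      apply Submodule.smul_mem
      apply Submodule.subset_span
      refine ⟨_, ?_, rfl⟩
      simp only [Finset.coe_image, Finset.coe_univ, Set.image_univ, Set.mem_range]
      exact ⟨⟨j, hj⟩, rfl⟩

/-- rank characterization -/
lemma srank_eq {d N : ℕ} (hd : 0 < d) (P : PN K m d) {φ : Module.Dual K (Hd K m d)} {x : K} (hx : x ≠ 0) (hP : P.rep = x • φ)
    (hle : ∃ (ι : Type) (_ : Fintype ι) (a : ι → K) (v : ι → Fin (m+1) → K), Fintype.card ι = N ∧ φ = ∑ j, a j • nu d (v j))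
    (hge : ∀ (n : ℕ) (b : Fin n → Fin (m+1) → K) (a : Fin n → K), φ = ∑ j, a j • nu d (b j) → N ≤ n) :
    srank d P = N := by
  unfold srank rankWrt
  set T := {r | ∃ S : Finset (PN K m d), ↑S ⊆ XSet K m d ∧ S.card = r ∧
    P.rep ∈ Submodule.span K (Projectivization.rep '' (S : Set (PN K m d)))} with hT
  obtain ⟨ι, _, a, v, hc, hφ⟩ := hle
  obtain ⟨S, h1, h2, h3⟩ := sum_span hd a v
  have hST : S.card ∈ T := ⟨S, h1, rfl, by rw [hP, hφ]; exact Submodule.smul_mem _ _ h3⟩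
  apply le_antisymm
  · exact (Nat.sInf_le hST).trans (h2.trans hc.le)
  · obtain ⟨S', h1', h2', h3'⟩ := Nat.sInf_mem ⟨_, hST⟩
    rw [← h2']
    have : φ ∈ Submodule.span K (Projectivization.rep '' (S' : Set (PN K m d))) := by
      have := Submodule.smul_mem _ x⁻¹ h3'
      rwa [hP, smul_smul, inv_mul_cancel₀ hx, one_smul] at this
    obtain ⟨b, a, h⟩ := span_sum S' h1' this
    exact hge _ b a h

lemma polyF_curve {V : Type} [AddCommGroup V] [Module K V] {F : V → K} (hF : F ∈ polyFunctions K V) (N : ℕ) (v : ℕ → V) :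
    ∃ p : Polynomial K, ∀ t : K, F (∑ i ∈ Finset.range N, t ^ i • v i) = p.eval t := by
  induction hF using Algebra.adjoin_induction with
  | mem g hg =>
    obtain ⟨φ, rfl⟩ := hg
    refine ⟨∑ i ∈ Finset.range N, Polynomial.C (φ (v i)) * Polynomial.X ^ i, fun t => ?_⟩
    rw [map_sum, Polynomial.eval_finsetSum]
    apply Finset.sum_congr rfl
    intro i _
    rw [map_smul, smul_eq_mul, Polynomial.eval_mul, Polynomial.eval_C, Polynomial.eval_pow, Polynomial.eval_X, mul_comm]
  | algebraMap r => exact ⟨Polynomial.C r, fun t => by simp⟩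
  | add f g _ _ hf hg =>
    obtain ⟨p, hp⟩ := hf
    obtain ⟨q, hq⟩ := hg
    exact ⟨p + q, fun t => by simp [hp, hq]⟩
  | mul f g _ _ hf hg =>
    obtain ⟨p, hp⟩ := hf
    obtain ⟨q, hq⟩ := hg
    exact ⟨p * q, fun t => by simp [hp, hq]⟩

lemma brank_eq [Infinite K] {d s : ℕ} (hd : 0 < d) (hs : 0 < s) (P : PN K m d) {φ : Module.Dual K (Hd K m d)} {x : K} (hx : x ≠ 0) (hP : P.rep = x • φ)
    (hle : ∃ (N : ℕ) (v : ℕ → Module.Dual K (Hd K m d)), v 0 = φ ∧ ∀ t : K, t ≠ 0 →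
      ∃ (ι : Type) (_ : Fintype ι) (a : ι → K) (b : ι → Fin (m+1) → K), Fintype.card ι = s ∧
        ∑ i ∈ Finset.range (N+1), t ^ i • v i = ∑ j, a j • nu d (b j))
    (hge : ∃ (ι : Type) (_ : Fintype ι) (_ : DecidableEq ι) (f g : ι → PR K m)
      (h : ∀ a b, f a * g b ∈ Hd K m d), Fintype.card ι = s ∧
        ∀ a b, φ ⟨f a * g b, h a b⟩ = if a = b then 1 else 0) :
    brank d P = s := by
  classical
  unfold brank brankWrt
  have hmem : s ∈ {s | 0 < s ∧ P ∈ secantWrt (XSet K m d) s} := by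
    refine ⟨hs, ?_⟩
    intro F hF hFT
    have hFz : ∀ (ι : Type) [Fintype ι] (a : ι → K) (b : ι → Fin (m+1) → K), Fintype.card ι ≤ s →
        ∑ j, a j • nu d (b j) ≠ 0 → ∀ c : K, F (c • ∑ j, a j • nu d (b j)) = 0 := by
      intro ι _ a b hc h0 c
      obtain ⟨S, h1, h2, h3⟩ := sum_span hd a b
      set ψ := ∑ j, a j • nu d (b j)
      obtain ⟨y, hy, hy'⟩ := rep_mk (K := K) ψ h0
      have := hFT (Projectivization.mk K ψ h0) ⟨S, h1, h2.trans hc, by rw [hy']; exact Submodule.smul_mem _ _ h3⟩ (c * y⁻¹)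
      rwa [hy', smul_smul, mul_assoc, inv_mul_cancel₀ hy, mul_one] at this
    have hF0 : F 0 = 0 := by
      have := hFz (Fin 1) (fun _ => 1) (fun _ _ => 1) (by simpa using Nat.one_le_of_lt hs) (by
        simp only [one_smul, Finset.univ_unique, Finset.sum_singleton]
        exact nu_ne d (fun h => by simpa using congrFun h 0)) 0
      rwa [zero_smul] at this
    obtain ⟨N, v, hv, hvt⟩ := hle
    intro c
    obtain ⟨p, hp⟩ := polyF_curve hF (N+1) (fun i => (c * x) • v i)
    have hpz : ∀ t : K, t ≠ 0 → p.eval t = 0 := by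
      intro t ht
      obtain ⟨ι, _, a, b, hc, hab⟩ := hvt t ht
      rw [← hp t]
      have : ∑ i ∈ Finset.range (N+1), t ^ i • (c * x) • v i = (c*x) • ∑ j, a j • nu d (b j) := by
        rw [← hab, Finset.smul_sum]
        apply Finset.sum_congr rfl
        intro i _
        rw [smul_comm]
      rw [this]
      by_cases h0 : ∑ j, a j • nu d (b j) = 0
      · rw [h0, smul_zero, hF0]
      · exact hFz ι a b hc.le h0 _
    have hp0 : p = 0 := by
      by_contra hne
      have : (p * Polynomial.X) = 0 := by
        apply Polynomial.funext
        intro t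
        by_cases ht : t = 0
        · simp [ht]
        · simp [hpz t ht]
      rcases mul_eq_zero.1 this with h | h
      · exact hne h
      · exact Polynomial.X_ne_zero h
    have := hp 0
    rw [Finset.sum_range_succ', hv] at this
    simp only [pow_succ, mul_zero, zero_smul, Finset.sum_const_zero, pow_zero, one_smul, zero_add, hp0, Polynomial.eval_zero] at this
    rw [hP, smul_smul]
    exact this
  apply le_antisymm (Nat.sInf_le hmem)
  obtain ⟨hs', hP'⟩ := Nat.sInf_mem ⟨s, hmem⟩
  set s' := sInf {s | 0 < s ∧ P ∈ secantWrt (XSet K m d) s} with hs'def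
  by_contra hlt
  push Not at hlt
  obtain ⟨ι, _, _, f, g, h, hc, hφ⟩ := hge
  let F : Module.Dual K (Hd K m d) → K := fun ψ => Matrix.det (Matrix.of fun a b => ψ ⟨f a * g b, h a b⟩)
  have hF : F ∈ polyFunctions K (Module.Dual K (Hd K m d)) := by
    have : F = ∑ σ : Equiv.Perm ι, (((Equiv.Perm.sign σ : ℤ) : K)) • ∏ i, (fun ψ : Module.Dual K (Hd K m d) => ψ ⟨f (σ i) * g i, h (σ i) i⟩) := by
      funext ψ
      show Matrix.det _ = _
      rw [Matrix.det_apply']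
      simp only [Matrix.of_apply, Finset.sum_apply, Pi.smul_apply, Finset.prod_apply, smul_eq_mul]
    rw [this]
    apply Subalgebra.sum_mem
    intro σ _
    apply Subalgebra.smul_mem
    apply Subalgebra.prod_mem
    intro i _
    apply Algebra.subset_adjoin
    exact ⟨Module.Dual.eval K _ ⟨f (σ i) * g i, h (σ i) i⟩, rfl⟩
  have key := hP' F hF (by
    rintro Q ⟨S, hS1, hS2, hS3⟩ c
    obtain ⟨b, a, hab⟩ := span_sum S hS1 (Submodule.smul_mem _ c hS3)
    rw [hab]
    show Matrix.det _ = 0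
    have hM : (Matrix.of fun i j => (∑ l, a l • nu d (b l)) ⟨f i * g j, h i j⟩ : Matrix ι ι K) =
        (Matrix.of fun i l => a l * eval (b l) (f i)) * (Matrix.of fun l j => eval (b l) (g j)) := by
      ext i j
      rw [Matrix.mul_apply]
      simp [LinearMap.sum_apply, nu_apply, mul_assoc]
    rw [hM]
    by_contra hdet
    have h1 := Matrix.rank_of_isUnit _ ((Matrix.isUnit_iff_isUnit_det _).2 (IsUnit.mk0 _ hdet))
    have h2 := Matrix.rank_mul_le_left (Matrix.of fun i l => a l * eval (b l) (f i)) (Matrix.of fun l j => eval (b l) (g j))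
    have h3 := Matrix.rank_le_card_width (Matrix.of fun i l => a l * eval (b l) (f i))
    rw [h1, hc] at h2
    simp only [Fintype.card_fin] at h3
    omega) x⁻¹
  rw [hP, smul_smul, inv_mul_cancel₀ hx, one_smul] at key
  have : F φ = 1 := by
    show Matrix.det _ = 1
    rw [← Matrix.det_one (n := ι) (R := K)]
    congr 1
    ext a b
    rw [Matrix.of_apply, hφ, Matrix.one_apply]
  rw [this] at key
  exact one_ne_zero key
end S10

namespace S10
open MvPolynomial
variable {K : Type} [Field K] {m : ℕ}

noncomputable abbrev LL (u : Fin 3 → Fin (m+1) → K) : (Fin 3 → K) →ₗ[K] (Fin (m+1) → K) := Fintype.linearCombination K u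

lemma LL_apply (u : Fin 3 → Fin (m+1) → K) (c : Fin 3 → K) : LL u c = c 0 • u 0 + c 1 • u 1 + c 2 • u 2 := by
  simp [Fintype.linearCombination_apply, Fin.sum_univ_three]

noncomputable def cD (u : Fin 3 → Fin (m+1) → K) (d i : ℕ) : Module.Dual K (Hd K m d) :=
  (Polynomial.lcoeff K i) ∘ₗ (rD (K := K)).toLinearMap ∘ₗ (sub (LL u)).toLinearMap ∘ₗ (Hd K m d).subtype

noncomputable def cR (u : Fin 3 → Fin (m+1) → K) (d i : ℕ) : Module.Dual K (Hd K m d) :=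
  (Polynomial.lcoeff K i) ∘ₗ (rR (K := K)).toLinearMap ∘ₗ (sub (LL u)).toLinearMap ∘ₗ (Hd K m d).subtype

lemma cD_apply (u : Fin 3 → Fin (m+1) → K) (d i : ℕ) (f : Hd K m d) : cD u d i f = (rD (sub (LL u) (f : PR K m))).coeff i := rfl
lemma cR_apply (u : Fin 3 → Fin (m+1) → K) (d i : ℕ) (f : Hd K m d) : cR u d i f = (rR (sub (LL u) (f : PR K m))).coeff i := rfl

lemma nu_D (u : Fin 3 → Fin (m+1) → K) (d : ℕ) (x : K) :
    nu d (u 0 + x • u 1) = ∑ i ∈ Finset.range (d+1), x ^ i • cD u d i := by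
  ext f
  rw [nu_apply, LinearMap.sum_apply]
  have := eval_rD (sub (LL u) (f : PR K m)) x
  rw [eval_sub, LL_apply] at this
  simp only [Matrix.cons_val, one_smul, zero_smul, add_zero] at this
  rw [← this, Polynomial.eval_eq_sum_range' (n := d+1)]
  · simp [cD_apply, mul_comm]
  · exact Nat.lt_succ_of_le (natDegree_rD (sub_hom _ f.2))

lemma nu_R (u : Fin 3 → Fin (m+1) → K) (d : ℕ) (x : K) :
    nu d (u 2 + x • u 0) = ∑ i ∈ Finset.range (d+1), x ^ i • cR u d i := by
  ext f
  rw [nu_apply, LinearMap.sum_apply]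
  have := eval_rR (sub (LL u) (f : PR K m)) x
  rw [eval_sub, LL_apply] at this
  simp only [Matrix.cons_val, one_smul, zero_smul, add_zero] at this
  rw [add_comm (u 2), ← this, Polynomial.eval_eq_sum_range' (n := d+1)]
  · simp [cR_apply, mul_comm]
  · exact Nat.lt_succ_of_le (natDegree_rR (sub_hom _ f.2))

lemma rR_top [Infinite K] {d : ℕ} {g : MvPolynomial (Fin 3) K} (hg : g.IsHomogeneous d) :
    (rR g).coeff d = eval ![1,0,0] g := by
  set q : Polynomial K := aeval ![1, 0, Polynomial.X] g with hq
  have hqe : ∀ t, q.eval t = eval ![1,0,t] g := by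
    intro t
    have : (Polynomial.aeval t).comp (aeval ![1, 0, Polynomial.X]) = (aeval ![1,0,t] : MvPolynomial (Fin 3) K →ₐ[K] K) := by
      apply MvPolynomial.algHom_ext
      intro i
      fin_cases i <;> simp
    have := congrArg (fun φ => φ g) this
    simpa [Polynomial.aeval_def, Polynomial.eval₂_eq_eval_map] using this
  have hqd : q.natDegree ≤ d := by
    apply natDegree_aeval hg
    intro i; fin_cases i <;> simp
  have hrd := natDegree_rR hg
  have : q = Polynomial.reflect d (rR g) := by
    have : (q - Polynomial.reflect d (rR g)) * Polynomial.X = 0 := by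
      apply Polynomial.funext
      intro t
      by_cases ht : t = 0
      · simp [ht]
      · simp only [Polynomial.eval_mul, Polynomial.eval_sub, Polynomial.eval_X, Polynomial.eval_zero]
        let : Invertible (t⁻¹) := invertibleOfNonzero (inv_ne_zero ht)
        have h := Polynomial.eval₂_reflect_mul_pow (RingHom.id K) (t⁻¹) d (rR g) hrd
        rw [invOf_eq_inv, inv_inv] at h
        change Polynomial.eval t _ * _ = Polynomial.eval _ _ at h
        rw [eval_rR] at h
        have h2 := hom_eval_smul hg t⁻¹ ![1,0,t]
        have h3 : t⁻¹ • ![1,0,t] = ![t⁻¹,0,1] := by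
          funext i; fin_cases i <;> simp [ht]
        rw [h3, ← hqe] at h2
        have h4 : (t⁻¹)^d ≠ 0 := pow_ne_zero _ (inv_ne_zero ht)
        rw [h2] at h
        have : Polynomial.eval t (Polynomial.reflect d (rR g)) = Polynomial.eval t q := by
          apply mul_right_cancel₀ h4; rw [h]; ring
        rw [this]; simp
    rcases mul_eq_zero.1 this with h | h
    · exact sub_eq_zero.1 h
    · exact absurd h Polynomial.X_ne_zero
  have h := congrArg (fun p => Polynomial.coeff p 0) this
  simp only [Polynomial.coeff_reflect, Polynomial.revAt_le (Nat.zero_le d), Nat.sub_zero] at h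
  rw [← h, Polynomial.coeff_zero_eq_eval_zero, hqe]

lemma cR_top [Infinite K] (u : Fin 3 → Fin (m+1) → K) (d : ℕ) : cR u d d = nu d (u 0) := by
  ext f
  rw [cR_apply, rR_top (sub_hom _ f.2), eval_sub, nu_apply, LL_apply]
  simp

noncomputable def Phi (w d : ℕ) {k : ℕ} (c : Fin k → Fin 3 → K) (u : Fin 3 → Fin (m+1) → K) : Module.Dual K (Hd K m d) :=
  cD u d (w-1) + nu d (u 0) + cR u d (w-1) + ∑ e, nu d (LL u (c e))

lemma Phi_apply (w d : ℕ) {k : ℕ} (c : Fin k → Fin 3 → K) (u : Fin 3 → Fin (m+1) → K) (f : Hd K m d) :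
    Phi w d c u f = phi3 w c (sub (LL u) (f : PR K m)) := by
  simp only [Phi, phi3, phi0, LinearMap.add_apply, LinearMap.sum_apply, cD_apply, cR_apply, nu_apply, eval_sub]
  simp [LL_apply]

lemma push_exists [Infinite K] (u : Fin 3 → Fin (m+1) → K) (hu : LinearIndependent K u) :
    ∃ p : (Fin (m+1) → K) →ₗ[K] (Fin 3 → K), ∀ g, sub (LL u) (sub p g) = g := by
  obtain ⟨p, hp⟩ := LinearMap.exists_leftInverse_of_injective (LL u) (by
    rw [LinearMap.ker_eq_bot]; exact linearIndependent_iff_injective_fintypeLinearCombination.1 hu)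
  refine ⟨p, fun g => ?_⟩
  apply MvPolynomial.funext
  intro x
  rw [eval_sub, eval_sub]
  have := LinearMap.congr_fun hp x
  simp only [LinearMap.comp_apply, LinearMap.id_apply] at this
  rw [this]

lemma roots [IsAlgClosed K] [CharZero K] (e N : ℕ) (hN : 0 < N) (he : e < N) :
    ∃ α a : Fin N → K, ∀ i ≤ e + N, ∑ j, α j * a j ^ i = if i = e ∨ i = e + N then 1 else 0 := by
  have : NeZero N := ⟨hN.ne'⟩
  have : NeZero (N : K) := ⟨by exact_mod_cast hN.ne'⟩
  obtain ⟨z, hz⟩ := HasEnoughRootsOfUnity.exists_primitiveRoot K N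
  refine ⟨fun j => (N : K)⁻¹ * (z ^ ((N-1)*e)) ^ (j : ℕ), fun j => z ^ (j : ℕ), ?_⟩
  intro i hi
  have h1 : ∀ j : Fin N, (N : K)⁻¹ * (z ^ ((N-1)*e)) ^ (j : ℕ) * (z ^ (j : ℕ))^i = (N:K)⁻¹ * (z ^ ((N-1)*e + i)) ^ (j : ℕ) := by
    intro j
    rw [mul_assoc, ← pow_mul, ← pow_mul, ← pow_add, ← pow_mul]
    congr 2; ring
  rw [Finset.sum_congr rfl (fun j _ => h1 j), ← Finset.mul_sum, Fin.sum_univ_eq_sum_range (fun j => (z ^ ((N-1)*e + i)) ^ j)]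
  have hdiv : N ∣ (N-1)*e + i ↔ (i = e ∨ i = e + N) := by
    have e1 : (N-1)*e + e = N * e := by
      obtain ⟨n, rfl⟩ := Nat.exists_eq_succ_of_ne_zero hN.ne'
      simp; ring
    constructor
    · intro h
      have h2 : (N : ℤ) ∣ (i : ℤ) - e := by
        have h' : (N : ℤ) ∣ (((N-1)*e + i : ℕ) : ℤ) := by exact_mod_cast h
        have e1' : (((N-1)*e : ℕ) : ℤ) + e = N * e := by exact_mod_cast e1
        have : (i : ℤ) - e = (((N-1)*e + i : ℕ) : ℤ) - N * e := by rw [← e1']; push_cast; ring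
        rw [this]
        exact dvd_sub h' (Dvd.intro _ rfl)
      obtain ⟨q, hq⟩ := h2
      have hq1 : q < 2 := by
        by_contra hcon; push Not at hcon
        nlinarith
      have hq2 : -1 < q := by
        by_contra hcon; push Not at hcon
        nlinarith
      have : q = 0 ∨ q = 1 := by omega
      rcases this with rfl | rfl
      · left; omega
      · right; omega
    · rintro (rfl | rfl)
      · rw [e1]; exact Dvd.intro _ rfl
      · rw [← add_assoc, e1]; exact (Dvd.intro _ rfl).add (dvd_refl _)
  by_cases h : N ∣ (N-1)*e + i
  · rw [if_pos (hdiv.1 h), (hz.pow_eq_one_iff_dvd _).2 h]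
    simp
  · rw [if_neg (fun h' => h (hdiv.2 h'))]
    have hx : z ^ ((N-1)*e+i) ≠ 1 := fun h' => h ((hz.pow_eq_one_iff_dvd _).1 h')
    have := geom_sum_mul (z ^ ((N-1)*e+i)) N
    rw [← pow_mul, mul_comm _ N, pow_mul, hz.pow_eq_one, one_pow, sub_self] at this
    rcases mul_eq_zero.1 this with h' | h'
    · rw [h', mul_zero]
    · exact absurd (sub_eq_zero.1 h') hx

lemma vand [CharZero K] (w : ℕ) (hw : 0 < w) : ∃ α : Fin w → K, ∀ i < w, ∑ j, α j * ((j : ℕ) : K) ^ i = if i = w-1 then 1 else 0 := by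
  set V := Matrix.vandermonde (fun j : Fin w => ((j : ℕ) : K)) with hV
  have hdet : IsUnit V.det := by
    apply IsUnit.mk0
    rw [hV, Matrix.det_vandermonde_ne_zero_iff]
    intro a b hab
    simp only [Nat.cast_inj] at hab
    exact Fin.ext hab
  refine ⟨Matrix.vecMul (fun i : Fin w => if i.val = w-1 then 1 else 0) V⁻¹, ?_⟩
  intro i hi
  have : Matrix.vecMul (Matrix.vecMul (fun i : Fin w => if i.val = w-1 then 1 else 0) V⁻¹) V = (fun i : Fin w => if i.val = w-1 then 1 else 0) := by
    rw [Matrix.vecMul_vecMul, Matrix.nonsing_inv_mul _ hdet, Matrix.vecMul_one]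
  have := congrFun this ⟨i, hi⟩
  simpa [Matrix.vecMul, dotProduct, hV, Matrix.vandermonde_apply] using this

lemma sum_moment {V : Type} [AddCommMonoid V] [Module K V] {ι : Type} [Fintype ι] (n : ℕ) (α a : ι → K) (v : ℕ → V) :
    ∑ j, α j • ∑ i ∈ Finset.range n, a j ^ i • v i = ∑ i ∈ Finset.range n, (∑ j, α j * a j ^ i) • v i := by
  simp only [Finset.smul_sum, Finset.sum_smul, smul_smul]
  rw [Finset.sum_comm]

end S10

namespace S10
open MvPolynomial
variable {K : Type} [Field K] {m : ℕ}

lemma sr_upper [IsAlgClosed K] [CharZero K] {w d k : ℕ} (hw : 3 ≤ w) (hd : 4*w + 2*k ≤ d + 1)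
    (c : Fin k → Fin 3 → K) (u : Fin 3 → Fin (m+1) → K) :
    ∃ (ι : Type) (_ : Fintype ι) (a : ι → K) (v : ι → Fin (m+1) → K), Fintype.card ι = 2*d+3+k-2*w ∧
      Phi w d c u = ∑ j, a j • nu d (v j) := by
  obtain ⟨α, a, ha⟩ := roots (K := K) (w-1) (d-w+2) (by omega) (by omega)
  obtain ⟨β, b, hb⟩ := roots (K := K) (w-1) (d-w+1) (by omega) (by omega)
  refine ⟨Fin (d-w+2) ⊕ Fin (d-w+1) ⊕ Fin k, inferInstance, Sum.elim α (Sum.elim β (fun _ => 1)),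
    Sum.elim (fun j => u 0 + a j • u 1) (Sum.elim (fun j => u 2 + b j • u 0) (fun e => LL u (c e))), ?_, ?_⟩
  · simp; omega
  · simp only [Fintype.sum_sum_type, Sum.elim_inl, Sum.elim_inr, one_smul]
    have h1 : ∑ j, α j • nu d (u 0 + a j • u 1) = cD u d (w-1) := by
      simp only [nu_D]
      rw [sum_moment, Finset.sum_eq_single (w-1)]
      · rw [ha _ (by omega), if_pos (Or.inl rfl), one_smul]
      · intro i hi hne
        rw [Finset.mem_range] at hi
        rw [ha _ (by omega), if_neg (by omega), zero_smul]
      · intro h; simp only [Finset.mem_range] at h; omega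
    have h2 : ∑ j, β j • nu d (u 2 + b j • u 0) = cR u d (w-1) + cR u d d := by
      simp only [nu_R]
      rw [sum_moment, Finset.sum_range_succ, hb _ (by omega), if_pos (by omega), one_smul, Finset.sum_eq_single (w-1)]
      · rw [hb _ (by omega), if_pos (Or.inl rfl), one_smul]
      · intro i hi hne
        rw [Finset.mem_range] at hi
        rw [hb _ (by omega), if_neg (by omega), zero_smul]
      · intro h; simp only [Finset.mem_range] at h; omega
    rw [h1, h2, cR_top, Phi]
    abel

lemma sr_lower [Infinite K] {w d k : ℕ} (hw : 3 ≤ w) (hd : 4*w + 2*k ≤ d + 1)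
    (c : Fin k → Fin 3 → K) (hc : ∀ i, c i 1 * c i 2 ≠ 0)
    (hcc : ∀ i j, i ≠ j → ∀ a : K, c i ≠ a • c j) (u : Fin 3 → Fin (m+1) → K) (hu : LinearIndependent K u)
    (n : ℕ) (b : Fin n → Fin (m+1) → K) (a : Fin n → K) (h : Phi w d c u = ∑ j, a j • nu d (b j)) :
    2*d+3+k-2*w ≤ n := by
  obtain ⟨p, hp⟩ := push_exists u hu
  have := core' hw hd c hc hcc (fun j => p (b j)) a (by
    intro f hf
    have h' := LinearMap.congr_fun h ⟨sub p f, sub_hom p hf⟩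
    rw [Phi_apply, hp] at h'
    change phi3 w c f = _
    rw [h']
    simp [LinearMap.sum_apply, nu_apply, eval_sub])
  omega

lemma br_lower [Infinite K] {w d k : ℕ} (hw : 3 ≤ w) (hd : 4*w + 2*k ≤ d + 1)
    (c : Fin k → Fin 3 → K) (hc : ∀ i, c i 1 * c i 2 ≠ 0)
    (hcc : ∀ i j, i ≠ j → ∀ a : K, c i ≠ a • c j) (u : Fin 3 → Fin (m+1) → K) (hu : LinearIndependent K u) :
    ∃ (ι : Type) (_ : Fintype ι) (_ : DecidableEq ι) (f g : ι → PR K m)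
      (h : ∀ a b, f a * g b ∈ Hd K m d), Fintype.card ι = 2*w+k ∧
        ∀ a b, Phi w d c u ⟨f a * g b, h a b⟩ = if a = b then 1 else 0 := by
  obtain ⟨p, hp⟩ := push_exists u hu
  obtain ⟨f, g, hf, hg, hfg⟩ := catlem (w := w) (n := 2*w+k-1) (n' := d - (2*w+k-1)) (by omega) (by omega) (by omega) c hc hcc
  refine ⟨Fin w ⊕ Fin w ⊕ Fin k, inferInstance, inferInstance, fun a => sub p (f a), fun a => sub p (g a), ?_, ?_, ?_⟩
  · intro a b
    have := (sub_hom p (hf a)).mul (sub_hom p (hg b))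
    rwa [show 2*w+k-1 + (d - (2*w+k-1)) = d by omega] at this
  · simp; omega
  · intro a b
    rw [Phi_apply]
    simp only [map_mul, hp]
    exact hfg a b

lemma shift_sum {V : Type} [AddCommMonoid V] [Module K V] (w d : ℕ) (hw : 0 < w) (hwd : w ≤ d) (t : K) (ht : t ≠ 0)
    (α : Fin w → K) (hα : ∀ i < w, ∑ j, α j * ((j : ℕ) : K) ^ i = if i = w-1 then 1 else 0) (v : ℕ → V) :
    ∑ j, ((t⁻¹)^(w-1) * α j) • ∑ i ∈ Finset.range (d+1), (t * ((j : ℕ) : K)) ^ i • v i =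
      ∑ l ∈ Finset.range (d-w+1+1), t ^ l • (∑ j, α j * ((j : ℕ) : K) ^ (l+(w-1))) • v (l+(w-1)) := by
  rw [sum_moment, show d+1 = (w-1) + (d-w+1+1) by omega, Finset.sum_range_add, Finset.sum_eq_zero, zero_add]
  · apply Finset.sum_congr rfl
    intro l _
    rw [smul_smul, Finset.mul_sum, add_comm l]
    congr 1
    apply Finset.sum_congr rfl
    intro j _
    rw [mul_pow, pow_add t, inv_pow]
    have : t^(w-1) ≠ 0 := pow_ne_zero _ ht
    field_simp
  · intro i hi
    rw [Finset.mem_range] at hi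
    have h := hα i (by omega)
    rw [if_neg (by omega)] at h
    have : ∑ j : Fin w, (t⁻¹)^(w-1) * α j * (t * ((j : ℕ) : K)) ^ i = (t⁻¹)^(w-1) * t^i * ∑ j, α j * ((j : ℕ) : K) ^ i := by
      rw [Finset.mul_sum]
      apply Finset.sum_congr rfl
      intro j _
      rw [mul_pow]; ring
    rw [this, h, mul_zero, zero_smul]

lemma br_upper [CharZero K] {w d k : ℕ} (hw : 3 ≤ w) (hd : 4*w + 2*k ≤ d + 1)
    (c : Fin k → Fin 3 → K) (u : Fin 3 → Fin (m+1) → K) :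
    ∃ (N : ℕ) (v : ℕ → Module.Dual K (Hd K m d)), v 0 = Phi w d c u ∧ ∀ t : K, t ≠ 0 →
      ∃ (ι : Type) (_ : Fintype ι) (a : ι → K) (b : ι → Fin (m+1) → K), Fintype.card ι = 2*w+k ∧
        ∑ i ∈ Finset.range (N+1), t ^ i • v i = ∑ j, a j • nu d (b j) := by
  obtain ⟨α, hα⟩ := vand (K := K) w (by omega)
  set M : ℕ → K := fun i => ∑ j, α j * ((j : ℕ) : K) ^ i with hM
  refine ⟨d-w+1, fun l => M (l+(w-1)) • cD u d (l+(w-1)) + M (l+(w-1)) • cR u d (l+(w-1)) +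
    if l = 0 then nu d (u 0) + ∑ e, nu d (LL u (c e)) else 0, ?_, ?_⟩
  · have : M (0 + (w-1)) = 1 := by
      rw [zero_add]; simp only [hM]; rw [hα _ (by omega), if_pos rfl]
    rw [zero_add] at this; simp only [zero_add, this, one_smul, if_true, Phi]
    abel
  · intro t ht
    refine ⟨Fin w ⊕ Fin w ⊕ Fin k, inferInstance,
      Sum.elim (fun j => (t⁻¹)^(w-1) * α j + if j.val = 0 then 1 else 0) (Sum.elim (fun j => (t⁻¹)^(w-1) * α j) (fun _ => 1)),
      Sum.elim (fun j => u 0 + (t * ((j : ℕ) : K)) • u 1) (Sum.elim (fun j => u 2 + (t * ((j : ℕ) : K)) • u 0) (fun e => LL u (c e))), by simp; omega, ?_⟩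
    simp only [Fintype.sum_sum_type, Sum.elim_inl, Sum.elim_inr, one_smul, add_smul, Finset.sum_add_distrib, smul_add]
    have h0 : ∑ j : Fin w, (if j.val = 0 then (1:K) else 0) • nu d (u 0 + (t * ((j : ℕ) : K)) • u 1) = nu d (u 0) := by
      rw [Finset.sum_eq_single ⟨0, by omega⟩]
      · simp
      · intro j _ hj
        rw [if_neg (fun h => hj (Fin.ext h)), zero_smul]
      · simp
    rw [h0]
    simp only [nu_D, nu_R]
    rw [shift_sum w d (by omega) (by omega) t ht α hα, shift_sum w d (by omega) (by omega) t ht α hα]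
    have h1 : ∑ i ∈ Finset.range (d-w+1+1), t ^ i • (if i = 0 then nu d (u 0) + ∑ e, nu d (LL u (c e)) else 0)
        = nu d (u 0) + ∑ e, nu d (LL u (c e)) := by
      rw [Finset.sum_eq_single 0]
      · simp
      · intro i _ hi
        rw [if_neg hi, smul_zero]
      · simp
    rw [h1]
    abel
end S10

namespace S10
open MvPolynomial
variable {K : Type} [Field K] {m : ℕ}

noncomputable def rho (p q : Fin (m+1) → K) : PR K m →ₐ[K] Polynomial K :=
  aeval (fun i => Polynomial.C (p i) + Polynomial.C (q i) * Polynomial.X)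

lemma eval_rho (p q : Fin (m+1) → K) (f : PR K m) (t : K) : (rho p q f).eval t = eval (p + t • q) f := by
  have : (Polynomial.aeval t).comp (rho p q) = (aeval (p + t • q) : PR K m →ₐ[K] K) := by
    apply MvPolynomial.algHom_ext
    intro i
    simp [rho]
    ring
  have := congrArg (fun φ => φ f) this
  simpa [Polynomial.aeval_def, Polynomial.eval₂_eq_eval_map, aeval_eq_eval] using this

lemma natDegree_rho (p q : Fin (m+1) → K) {n : ℕ} {f : PR K m} (hf : f.IsHomogeneous n) : (rho p q f).natDegree ≤ n := by
  apply natDegree_aeval hf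
  intro i
  compute_degree

lemma rho_zero [Infinite K] (p q : Fin (m+1) → K) {n : ℕ} {f : PR K m} (hf : f.IsHomogeneous n) (h : rho p q f = 0)
    (a b : K) : eval (a • p + b • q) f = 0 := by
  have h1 : ∀ a b : K, a ≠ 0 → eval (a • p + b • q) f = 0 := by
    intro a b ha
    have : a • p + b • q = a • (p + (a⁻¹ * b) • q) := by
      rw [smul_add, smul_smul, ← mul_assoc, mul_inv_cancel₀ ha, one_mul]
    rw [this, hom_eval_smul hf, ← eval_rho, h]; simp
  have h2 : rho (b • q) p f = 0 := by
    have : rho (b • q) p f * Polynomial.X = 0 := by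
      apply Polynomial.funext
      intro t
      by_cases ht : t = 0
      · simp [ht]
      · rw [Polynomial.eval_mul, eval_rho, add_comm (b • q), h1 t b ht]; simp
    rcases mul_eq_zero.1 this with h | h
    · exact h
    · exact absurd h Polynomial.X_ne_zero
  have := eval_rho (b • q) p f a
  rw [h2, add_comm (b • q)] at this
  simpa using this.symm

lemma mem_line [Infinite K] (p q : Fin (m+1) → K) {n : ℕ} {f : PR K m} (hf : f.IsHomogeneous n) (h : rho p q f = 0) :
    f ∈ idealOfSet {a : Pm K m | a.submodule ≤ Submodule.span K {p, q}} := by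
  apply Ideal.subset_span
  refine ⟨⟨n, hf⟩, ?_⟩
  intro a ha
  have : a.rep ∈ a.submodule := by rw [Projectivization.submodule_eq]; exact Submodule.mem_span_singleton_self _
  obtain ⟨x, y, hxy⟩ := Submodule.mem_span_pair.1 (ha this)
  rw [← hxy]
  exact rho_zero p q hf h x y

lemma lin_forms [Infinite K] (p q : Fin (m+1) → K) (hpq : LinearIndependent K ![p, q]) :
    ∃ x y : PR K m, x.IsHomogeneous 1 ∧ y.IsHomogeneous 1 ∧ rho p q x = 1 ∧ rho p q y = Polynomial.X := by
  obtain ⟨l, hl⟩ := LinearMap.exists_leftInverse_of_injective (Fintype.linearCombination K ![p,q]) (by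
    rw [LinearMap.ker_eq_bot]; exact linearIndependent_iff_injective_fintypeLinearCombination.1 hpq)
  have hl' : ∀ t : K, l (p + t • q) = ![1, t] := by
    intro t
    have := LinearMap.congr_fun hl ![1,t]
    simpa [Fintype.linearCombination_apply] using this
  refine ⟨sub l (X 0), sub l (X 1), sub_hom l (isHomogeneous_X K 0), sub_hom l (isHomogeneous_X K 1), ?_, ?_⟩
  · apply Polynomial.funext
    intro t
    rw [eval_rho, eval_sub, hl']; simp
  · apply Polynomial.funext
    intro t
    rw [eval_rho, eval_sub, hl']; simp

lemma lift_poly (p q : Fin (m+1) → K) (x y : PR K m) (hx : x.IsHomogeneous 1) (hy : y.IsHomogeneous 1)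
    (hrx : rho p q x = 1) (hry : rho p q y = Polynomial.X) (u : Polynomial K) (r : ℕ) (hu : u.natDegree ≤ r) :
    ∃ g : PR K m, g.IsHomogeneous r ∧ rho p q g = u := by
  refine ⟨∑ i ∈ Finset.range (r+1), C (u.coeff i) * (y ^ i * x ^ (r-i)), ?_, ?_⟩
  · apply IsHomogeneous.sum
    intro i hi
    apply IsHomogeneous.C_mul
    have := (hy.pow i).mul (hx.pow (r-i))
    rwa [show 1 * i + 1 * (r-i) = r by rw [Finset.mem_range] at hi; omega] at this
  · rw [map_sum]
    conv_rhs => rw [u.as_sum_range_C_mul_X_pow' (n := r+1) (by omega)]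
    apply Finset.sum_congr rfl
    intro i _
    rw [map_mul, map_mul, map_pow, map_pow, hrx, hry, one_pow, mul_one]
    congr 1
    exact (rho p q).commutes _

lemma sat_pow {I : Ideal (PR K m)} (hI : IsSatI I) (L : ℕ) : ∀ h : PR K m,
    (∀ z ∈ (Ideal.span (Set.range (X : Fin (m+1) → PR K m)))^L, z * h ∈ I) → h ∈ I := by
  induction L with
  | zero =>
    intro h hz
    simpa using hz 1 (by simp)
  | succ L ih =>
    intro h hz
    apply hI
    intro i
    apply ih
    intro z hz'
    rw [← mul_assoc]
    apply hz
    rw [pow_succ]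
    exact Ideal.mul_mem_mul hz' (Ideal.subset_span ⟨i, rfl⟩)

lemma hilb_le {I : Ideal (PR K m)} (p q : Fin (m+1) → K) (v t : ℕ)
    (h : ∀ f : PR K m, f.IsHomogeneous t → (∀ i < v, (rho p q f).coeff i = 0) → f ∈ I) : hilbQ I t ≤ v := by
  unfold hilbQ
  set A : Hd K m t →ₗ[K] PR K m ⧸ I := (Ideal.Quotient.mkₐ K I).toLinearMap ∘ₗ (Hd K m t).subtype with hA
  have hr : (Hd K m t).map (Ideal.Quotient.mkₐ K I).toLinearMap = LinearMap.range A := by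
    rw [hA, LinearMap.range_comp, Submodule.range_subtype]
  rw [hr]
  let j : Hd K m t →ₗ[K] (Fin v → K) := LinearMap.pi (fun i => (Polynomial.lcoeff K i.val) ∘ₗ (rho p q).toLinearMap ∘ₗ (Hd K m t).subtype)
  have hker : LinearMap.ker j ≤ LinearMap.ker A := by
    intro f hf
    rw [LinearMap.mem_ker] at hf ⊢
    have : (f : PR K m) ∈ I := by
      apply h _ f.2
      intro i hi
      exact congrFun hf ⟨i, hi⟩
    simpa [hA] using Ideal.Quotient.eq_zero_iff_mem.2 this
  have : FiniteDimensional K (Hd K m t) := finH _ _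
  have h1 := LinearMap.finrank_range_add_finrank_ker A
  have h2 := LinearMap.finrank_range_add_finrank_ker j
  have h3 := Submodule.finrank_mono hker
  have h4 := Submodule.finrank_le (LinearMap.range j)
  rw [Module.finrank_fin_fun] at h4
  omega

lemma lemA [IsAlgClosed K] {I : Ideal (PR K m)} (hH : IsHomogI I) (hS : IsSatI I) {w : ℕ} (hdeg : idealDeg I = w)
    (p q : Fin (m+1) → K) (hpq : LinearIndependent K ![p, q]) (O : Pm K m) (hO : O.submodule = Submodule.span K {p})
    (hsup : pzeroLocus I = {O}) (hline : idealOfSet {a : Pm K m | a.submodule ≤ Submodule.span K {p, q}} ≤ I)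
    {n : ℕ} {f : PR K m} (hf : f.IsHomogeneous n) (hfI : f ∈ I) : ∀ i < w, (rho p q f).coeff i = 0 := by
  have : Infinite K := IsAlgClosed.instInfinite
  by_contra hcon
  push Not at hcon
  obtain ⟨i, hi, hfi⟩ := hcon
  obtain ⟨x, y, hx, hy, hrx, hry⟩ := lin_forms p q hpq
  have hne : rho p q f ≠ 0 := fun h => hfi (by rw [h]; simp)
  obtain ⟨v, hv, u, hu, hu0⟩ := factor_X hne
  have hdn := natDegree_rho p q hf
  have hvi : v ≤ i := by
    by_contra hlt
    push Not at hlt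
    apply hfi
    exact Polynomial.X_pow_dvd_iff.1 ⟨u, hu⟩ i hlt
  have lift : ∀ (t : ℕ) (h : PR K m), h.IsHomogeneous t → ∀ u' : Polynomial K, rho p q h = Polynomial.X ^ v * u' → u' ≠ 0 →
      ∃ g : PR K m, g.IsHomogeneous (t - v) ∧ rho p q g = u' ∧ h - y ^ v * g ∈ I := by
    intro t h hh u' hu' hu'0
    have hdt := natDegree_rho p q hh
    have hd2 : (rho p q h).natDegree = v + u'.natDegree := by
      rw [hu', Polynomial.natDegree_mul (pow_ne_zero _ Polynomial.X_ne_zero) hu'0, Polynomial.natDegree_X_pow]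
    obtain ⟨g, hg, hgu⟩ := lift_poly p q x y hx hy hrx hry u' (t - v) (by omega)
    refine ⟨g, hg, hgu, ?_⟩
    apply hline
    apply mem_line (n := t)
    · have := (hy.pow v).mul hg
      rw [show 1 * v + (t-v) = t by omega] at this
      exact hh.sub this
    · rw [map_sub, map_mul, map_pow, hry, hgu, hu', sub_self]
  have hu00 : u ≠ 0 := fun h => hu0 (by simp [h])
  obtain ⟨g, hg, hgu, hgI⟩ := lift n f hf u hu hu00
  have hyg : y ^ v * g ∈ I := by
    have := I.sub_mem hfI hgI
    simpa using this
  set N : Ideal (PR K m) := Submodule.comap (LinearMap.toSpanSingleton (PR K m) (PR K m) (y^v)) I with hN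
  have hNm : ∀ h, h ∈ N ↔ h * y ^ v ∈ I := by
    intro h
    rw [hN, Submodule.mem_comap, LinearMap.toSpanSingleton_apply, smul_eq_mul]
  have hrad : Ideal.span (Set.range (X : Fin (m+1) → PR K m)) ≤ N.radical := by
    rw [← MvPolynomial.vanishingIdeal_zeroLocus_eq_radical (K := K), Ideal.span_le]
    rintro _ ⟨j, rfl⟩
    rw [SetLike.mem_coe, MvPolynomial.mem_vanishingIdeal_iff]
    intro z hz
    rw [MvPolynomial.mem_zeroLocus_iff] at hz
    by_cases hz0 : z = 0
    · simp [hz0]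
    exfalso
    have hzO : Projectivization.mk K z hz0 ∈ pzeroLocus I := by
      intro f hf n
      obtain ⟨a, ha, har⟩ := rep_mk (K := K) z hz0
      rw [har, hom_eval_smul (homogeneousComponent_isHomogeneous n f)]
      have := hz (homogeneousComponent n f) ((hNm _).2 (I.mul_mem_right _ (hH f hf n)))
      rw [aeval_eq_eval] at this
      erw [this]
      simp
    rw [hsup, Set.mem_singleton_iff] at hzO
    have hzp : z ∈ Submodule.span K {p} := by
      rw [← hO, ← hzO, Projectivization.submodule_mk]; exact Submodule.mem_span_singleton_self _
    obtain ⟨a, ha⟩ := Submodule.mem_span_singleton.1 hzp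
    have ha0 : a ≠ 0 := by rintro rfl; apply hz0; rw [← ha, zero_smul]
    have := hz g ((hNm _).2 (by rwa [mul_comm]))
    rw [aeval_eq_eval] at this
    change eval z g = 0 at this
    rw [← ha, hom_eval_smul hg] at this
    have h2 := eval_rho p q g 0
    rw [zero_smul, add_zero, hgu] at h2
    rw [← h2] at this
    exact mul_ne_zero (pow_ne_zero _ ha0) hu0 this
  obtain ⟨L, hL⟩ := Ideal.exists_pow_le_of_le_radical_of_fg hrad (Submodule.fg_span (Set.finite_range _))
  have hyv : y ^ v ∈ I := sat_pow hS L _ (fun z hz => (hNm z).1 (hL hz))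
  have hle : ∀ t, hilbQ I t ≤ v := by
    intro t
    apply hilb_le p q
    intro h hh hz
    obtain ⟨u', hu'⟩ := Polynomial.X_pow_dvd_iff.2 hz
    by_cases h0 : u' = 0
    · apply hline
      apply mem_line p q hh
      rw [hu', h0, mul_zero]
    · obtain ⟨g', _, _, hgI'⟩ := lift t h hh u' hu' h0
      have := I.add_mem hgI' (I.mul_mem_right g' hyv)
      simpa using this
  have : idealDeg I ≤ v := by
    unfold idealDeg
    apply Filter.limsup_le_of_le
    · exact Filter.isCobounded_le_of_bot
    · exact Filter.Eventually.of_forall hle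
  omega
end S10

namespace S10
open MvPolynomial
variable {K : Type} [Field K] {m : ℕ}

lemma rD_rho [Infinite K] (u : Fin 3 → Fin (m+1) → K) (f : PR K m) : rD (sub (LL u) f) = rho (u 0) (u 1) f := by
  apply Polynomial.funext
  intro t
  rw [eval_rD, eval_sub, LL_apply, eval_rho]
  simp

lemma rR_rho [Infinite K] (u : Fin 3 → Fin (m+1) → K) (f : PR K m) : rR (sub (LL u) f) = rho (u 2) (u 0) f := by
  apply Polynomial.funext
  intro t
  rw [eval_rR, eval_sub, LL_apply, eval_rho]
  simp [add_comm (u 2)]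

lemma idealOfSet_eval {S : Set (Pm K m)} {f : PR K m} (hf : f ∈ idealOfSet S) {a : Pm K m} (ha : a ∈ S) :
    eval a.rep f = 0 := by
  have : idealOfSet S ≤ RingHom.ker (eval a.rep) := by
    apply Ideal.span_le.2
    rintro g ⟨_, hg⟩
    exact hg a ha
  exact this hf

lemma sub_eq_span (O : Pm K m) : O.submodule = Submodule.span K {O.rep} := Projectivization.submodule_eq O

lemma finrank_pair {a b : Fin (m+1) → K} (h : LinearIndependent K ![a, b]) :
    Module.finrank K (Submodule.span K {a, b}) = 2 := by
  have h1 : Set.range ![a, b] = {a, b} := by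
    ext x; simp [eq_comm, or_comm]
  have := finrank_span_eq_card h
  rw [← h1, this]; rfl

lemma exists_frame {WD WR : Submodule K (Fin (m+1) → K)}
    (hWD : Module.finrank K WD = 2) (hWR : Module.finrank K WR = 2)
    {O : Pm K m} (hO : {a : Pm K m | a.submodule ≤ WD} ∩ {a : Pm K m | a.submodule ≤ WR} = {O})
    {O' : Pm K m} (hO'R : O'.submodule ≤ WR) (hO'O : O' ≠ O) :
    ∃ u : Fin 3 → Fin (m+1) → K, LinearIndependent K u ∧ u 0 = O.rep ∧ u 2 = O'.rep ∧
      WD = Submodule.span K {u 0, u 1} ∧ WR = Submodule.span K {u 2, u 0} := by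
  have hOm : O ∈ {a : Pm K m | a.submodule ≤ WD} ∩ {a : Pm K m | a.submodule ≤ WR} := by rw [hO]; rfl
  have hOD : O.rep ∈ WD := by
    apply hOm.1; rw [sub_eq_span]; exact Submodule.mem_span_singleton_self _
  have hOR : O.rep ∈ WR := by
    apply hOm.2; rw [sub_eq_span]; exact Submodule.mem_span_singleton_self _
  have hO'm : O'.rep ∈ WR := by
    apply hO'R; rw [sub_eq_span]; exact Submodule.mem_span_singleton_self _
  have hO'D : O'.rep ∉ WD := by
    intro h
    have : O' ∈ ({O} : Set (Pm K m)) := by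
      rw [← hO]
      refine ⟨?_, hO'R⟩
      change O'.submodule ≤ WD
      rw [sub_eq_span, Submodule.span_singleton_le_iff_mem]; exact h
    exact hO'O this
  obtain ⟨v, hvD, hv⟩ : ∃ v ∈ WD, v ∉ Submodule.span K {O.rep} := by
    by_contra hcon
    push Not at hcon
    have h1 : Module.finrank K WD ≤ Module.finrank K (Submodule.span K {O.rep}) := Submodule.finrank_mono hcon
    rw [finrank_span_singleton O.rep_nonzero] at h1
    omega
  have hp : LinearIndependent K ![O.rep, v] := by
    rw [LinearIndependent.pair_iff' O.rep_nonzero]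
    intro a ha
    exact hv (Submodule.mem_span_singleton.2 ⟨a, ha⟩)
  have hp2 : LinearIndependent K ![O.rep, O'.rep] := by
    rw [LinearIndependent.pair_iff' O.rep_nonzero]
    intro a ha
    exact hO'D (ha ▸ WD.smul_mem a hOD)
  have e1 : Submodule.span K {O.rep, v} = WD := by
    apply Submodule.eq_of_le_of_finrank_eq
    · rw [Submodule.span_le]; rintro x (rfl | rfl) <;> assumption
    · rw [finrank_pair hp, hWD]
  have e2 : Submodule.span K {O'.rep, O.rep} = WR := by
    rw [Set.pair_comm]
    apply Submodule.eq_of_le_of_finrank_eq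
    · rw [Submodule.span_le]; rintro x (rfl | rfl) <;> assumption
    · rw [finrank_pair hp2, hWR]
  refine ⟨![O.rep, v, O'.rep], ?_, rfl, rfl, e1.symm, e2.symm⟩
  rw [Fintype.linearIndependent_iff]
  intro g hg
  rw [Fin.sum_univ_three] at hg
  simp only [Matrix.cons_val] at hg
  have h2 : g 2 = 0 := by
    by_contra h2
    apply hO'D
    have : O'.rep = (g 2)⁻¹ • (-(g 0 • O.rep + g 1 • v)) := by
      rw [← eq_neg_iff_add_eq_zero.2 ((add_comm _ _).trans hg), smul_smul, inv_mul_cancel₀ h2, one_smul]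
    rw [this]
    exact WD.smul_mem _ (WD.neg_mem (WD.add_mem (WD.smul_mem _ hOD) (WD.smul_mem _ hvD)))
  rw [h2, zero_smul, add_zero] at hg
  obtain ⟨h0, h1⟩ := LinearIndependent.pair_iff.1 hp _ _ hg
  intro i
  fin_cases i
  · exact h0
  · exact h1
  · exact h2

lemma final [IsAlgClosed K] [CharZero K]
    (w s d : ℕ) (hw : 3 ≤ w) (hs : 2 * w ≤ s) (hd : 2 * s ≤ d + 1)
    (WD WR : Submodule K (Fin (m+1) → K))
    (hWD : Module.finrank K WD = 2) (hWR : Module.finrank K WR = 2)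
    (O : Pm K m)
    (hO : {a : Pm K m | a.submodule ≤ WD} ∩ {a : Pm K m | a.submodule ≤ WR} = {O})
    (A1 : PSub K m) (hA1D : idealOfSet {a : Pm K m | a.submodule ≤ WD} ≤ A1.I)
    (hA1deg : idealDeg A1.I = w) (hA1sup : pzeroLocus A1.I = {O})
    (O' : Pm K m) (hO'R : O'.submodule ≤ WR) (hO'O : O' ≠ O)
    (A2 : PSub K m) (hA2R : idealOfSet {a : Pm K m | a.submodule ≤ WR} ≤ A2.I)
    (hA2deg : idealDeg A2.I = w) (hA2sup : pzeroLocus A2.I = {O'}) :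
    GenerallyOn (WD ⊔ WR) (s - 2 * w) (fun e =>
      Function.Injective e →
        ∃ P : PN K m d,
          inSpanI (A1.I ⊓ A2.I ⊓ idealOfSet (Set.range e)) d P ∧
          brank d P = s ∧ srank d P + 4 * w = 2 * d + 3 + s) := by
  obtain ⟨u, hu, hu0, hu2, eD, eR⟩ := exists_frame hWD hWR hO hO'R hO'O
  have : Infinite K := IsAlgClosed.instInfinite
  have hm0 : u 0 ∈ WD := by rw [eD]; exact Submodule.subset_span (by simp)
  have hm1 : u 1 ∈ WD := by rw [eD]; exact Submodule.subset_span (by simp)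
  have hm2 : u 2 ∈ WR := by rw [eR]; exact Submodule.subset_span (by simp)
  have hmem : ∀ j, u j ∈ WD ⊔ WR := by
    intro j
    fin_cases j
    · exact le_sup_left (a := WD) (b := WR) hm0
    · exact le_sup_left (a := WD) (b := WR) hm1
    · exact le_sup_right (a := WD) (b := WR) hm2
  refine ⟨fun j => ⟨u j, hmem j⟩, ?_, ∏ i, (X (i,1) * X (i,2)), ?_, ?_⟩
  · apply le_antisymm
    · rw [Submodule.span_le]; rintro _ ⟨j, rfl⟩; exact hmem j
    · rw [sup_le_iff]
      constructor
      · conv_lhs => rw [eD]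
        apply Submodule.span_mono
        rintro x (rfl | rfl)
        · exact ⟨0, rfl⟩
        · exact ⟨1, rfl⟩
      · conv_lhs => rw [eR]
        apply Submodule.span_mono
        rintro x (rfl | rfl)
        · exact ⟨2, rfl⟩
        · exact ⟨0, rfl⟩
  · exact Finset.prod_ne_zero_iff.2 fun i _ => mul_ne_zero (X_ne_zero _) (X_ne_zero _)
  intro c hF e he hinj
  have hc : ∀ i, c i 1 * c i 2 ≠ 0 := by
    intro i
    simp only [map_prod, map_mul, eval_X] at hF
    exact Finset.prod_ne_zero_iff.1 hF i (Finset.mem_univ _)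
  have he' : ∀ i, (e i).submodule = Submodule.span K {LL u (c i)} := he
  have hcc : ∀ i j, i ≠ j → ∀ a : K, c i ≠ a • c j := by
    intro i j hij a h
    have ha : a ≠ 0 := by
      rintro rfl
      apply hc i
      rw [h]; simp
    apply hij
    apply hinj
    apply Projectivization.submodule_injective
    rw [he', he', h, map_smul]
    exact Submodule.span_singleton_smul_eq (IsUnit.mk0 a ha) _
  have hd' : 4*w + 2*(s - 2*w) ≤ d + 1 := by omega
  have hPhi : Phi w d c u ≠ 0 := by
    intro h
    have := sr_lower hw hd' c hc hcc u hu 0 ![] ![] (by simp [h])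
    omega
  obtain ⟨x, hx, hP⟩ := rep_mk (K := K) _ hPhi
  have hp01 : LinearIndependent K ![u 0, u 1] := by
    have := hu.comp ![0, 1] (by decide)
    convert this using 1
    ext i; fin_cases i <;> rfl
  have hp20 : LinearIndependent K ![u 2, u 0] := by
    have := hu.comp ![2, 0] (by decide)
    convert this using 1
    ext i; fin_cases i <;> rfl
  refine ⟨Projectivization.mk K _ hPhi, ?_, ?_, ?_⟩
  · intro f hf
    rw [hP, LinearMap.smul_apply]
    obtain ⟨⟨hf1, hf2⟩, hf3⟩ := hf
    have l1 := lemA A1.homog A1.sat hA1deg (u 0) (u 1) hp01 O (by rw [hu0]; exact sub_eq_span O) hA1sup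
      (by rw [← eD]; exact hA1D) f.2 hf1
    have l2 := lemA A2.homog A2.sat hA2deg (u 2) (u 0) hp20 O' (by rw [hu2]; exact sub_eq_span O') hA2sup
      (by rw [← eR]; exact hA2R) f.2 hf2
    have l0 : eval (u 0) (f : PR K m) = 0 := by
      have := eval_rho (u 0) (u 1) (f : PR K m) 0
      rw [← Polynomial.coeff_zero_eq_eval_zero, l1 0 (by omega)] at this
      simpa using this.symm
    have l3 : ∀ i, eval (LL u (c i)) (f : PR K m) = 0 := by
      intro i
      have h1 : LL u (c i) ∈ (e i).submodule := by rw [he']; exact Submodule.mem_span_singleton_self _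
      rw [sub_eq_span, Submodule.mem_span_singleton] at h1
      obtain ⟨a, ha⟩ := h1
      rw [← ha, hom_eval_smul f.2, idealOfSet_eval hf3 ⟨i, rfl⟩, mul_zero]
    rw [Phi]
    simp only [LinearMap.add_apply, LinearMap.sum_apply, cD_apply, cR_apply, nu_apply, rD_rho, rR_rho, l0, l3,
      l1 (w-1) (by omega), l2 (w-1) (by omega)]
    simp
  · rw [brank_eq (s := 2*w + (s-2*w)) (by omega) (by omega) _ hx hP (br_upper hw hd' c u) (br_lower hw hd' c hc hcc u hu)]
    omega
  · rw [srank_eq (by omega) _ hx hP (sr_upper hw hd' c u) (sr_lower hw hd' c hc hcc u hu)]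
    omega
end S10

/-- Lemma 8 (`o3`): with `w ≥ 3`, `s ≥ 2w`, `d ≥ 2s-1`, distinct coplanar lines `D, R`
meeting at `O` spanning the plane `U`, `A₁ ⊂ D` the degree-`w` divisor supported at `O`,
`A₂ ⊂ R` the degree-`w` divisor supported at `O' ∈ R ∖ {O}`, and a general subset `E ⊂ U`
of cardinality `s - 2w`: there is `P ∈ ⟨ν_d(A₁ ∪ A₂ ∪ E)⟩` with `br(P) = s` and
`sr(P) = 2d+3+s-4w`. -/
theorem stmt10 (K : Type) [Field K] [IsAlgClosed K] [CharZero K]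
    (m w s d : ℕ) (hm : 2 ≤ m) (hw : 3 ≤ w) (hs : 2 * w ≤ s) (hd : 2 * s ≤ d + 1)
    (WD WR : Submodule K (Fin (m+1) → K))
    (hWD : Module.finrank K WD = 2) (hWR : Module.finrank K WR = 2) (hDR : WD ≠ WR)
    (O : Pm K m)
    (hO : {a : Pm K m | a.submodule ≤ WD} ∩ {a : Pm K m | a.submodule ≤ WR} = {O})
    (A1 : PSub K m) (hA1D : idealOfSet {a : Pm K m | a.submodule ≤ WD} ≤ A1.I)
    (hA1z : IsZeroDimI A1.I) (hA1deg : idealDeg A1.I = w) (hA1sup : pzeroLocus A1.I = {O})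
    (O' : Pm K m) (hO'R : O'.submodule ≤ WR) (hO'O : O' ≠ O)
    (A2 : PSub K m) (hA2R : idealOfSet {a : Pm K m | a.submodule ≤ WR} ≤ A2.I)
    (hA2z : IsZeroDimI A2.I) (hA2deg : idealDeg A2.I = w) (hA2sup : pzeroLocus A2.I = {O'}) :
    GenerallyOn (WD ⊔ WR) (s - 2 * w) (fun e =>
      Function.Injective e →
        ∃ P : PN K m d,
          inSpanI (A1.I ⊓ A2.I ⊓ idealOfSet (Set.range e)) d P ∧
          brank d P = s ∧ srank d P + 4 * w = 2 * d + 3 + s) := by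
  exact S10.final w s d hw hs hd WD WR hWD hWR O hO A1 hA1D hA1deg hA1sup O' hO'R hO'O A2 hA2R hA2deg hA2sup
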